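/- arXiv:2012.10864 — 3 statements merged into one kernel-verified Lean document; each statement's English description precedes it below -/
import Mathlib

section
/- Mittag-Leffler type operators: under (H0), let β > 0 and K = k₀⁺(1). For every g ∈ L¹[−1,1] (respectively g ∈ C[−1,1]) and every integer n ≥ 1, the iterate (I^ψ_+)ⁿ g is continuous on [−1,1] and satisfies |(I^ψ_+)ⁿ g(x)| ≤ 2K ‖g‖ (K(1+x))^{n−1}/(n−1)! for every x ∈ [−1,1], where ‖g‖ is the L¹ (respectively supremum) norm. Consequently the series E^{ψ,β}_+ g := Σ_{n=0}^∞ βⁿ (I^ψ_+)ⁿ g converges in L¹[−1,1] (respectively in C[−1,1]) and defines a bounded linear operator with ‖E^{ψ,β}_+ g‖ ≤ ‖g‖ (1 + 2Kβ e^{2Kβ}). Moreover, for every g ∈ L¹[−1,1], the function u = E^{ψ,β}_+ I^ψ_+ g satisfies ∂^ψ_+ u = g + β u a.e. on [−1,1]. -/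
open MeasureTheory Set Filter Topology

noncomputable section

/-- The tail `φ((y, ∞))` of the Lévy measure `φ`. -/
def levyTail (φ : Measure ℝ) (y : ℝ) : ℝ := (φ (Ioi y)).toReal

/-- The function `Φ(x) = ∫_x^∞ φ((y,∞)) dy` for `x > 0`, and `0` for `x ≤ 0`. -/
def PhiFn (φ : Measure ℝ) (x : ℝ) : ℝ :=
  if 0 < x then ∫ y in Ioi x, levyTail φ y else 0

/-- The Laplace exponent `ψ(ξ) = ξ² ∫_0^∞ e^{-ξ x} Φ(x) dx`. -/
def psiFn (φ : Measure ℝ) (ξ : ℂ) : ℂ :=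
  ξ ^ 2 * ∫ x in Ioi (0 : ℝ), Complex.exp (-ξ * (x : ℂ)) * (PhiFn φ x : ℂ)

/-- Assumption (H0): `φ` is a nonnegative Borel measure on `(0,∞)` with
`∫ (z² ∧ z) φ(dz) < ∞` and `∫_{(0,1)} z φ(dz) = ∞`. -/
def H0 (φ : Measure ℝ) : Prop :=
  φ (Iic 0) = 0 ∧
  (∫⁻ z in Ioi (0 : ℝ), ENNReal.ofReal (min (z ^ 2) z) ∂φ) < ⊤ ∧
  (∫⁻ z in Ioo (0 : ℝ) 1, ENNReal.ofReal z ∂φ) = ⊤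

/-- The defining properties of the scale kernel `k₋₁⁺` (extension by zero to `(-∞,-1)`
of the scale function `k₋₁` of Lemma 3.1): nonnegative on `[-1,∞)`, continuous on
`(-1,∞)`, locally integrable, of sub-exponential growth, with Laplace transform
`∫_0^∞ e^{-ξ y} k₋₁(y-1) dy = ξ/ψ(ξ)` on `{Re ξ > 0}`. -/
def IsScaleKernel (φ : Measure ℝ) (k : ℝ → ℝ) : Prop :=
  (∀ x : ℝ, x < -1 → k x = 0) ∧
  (∀ x : ℝ, -1 ≤ x → 0 ≤ k x) ∧
  ContinuousOn k (Ioi (-1)) ∧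
  LocallyIntegrableOn k (Ici (-1)) ∧
  (∀ ε : ℝ, 0 < ε → Tendsto (fun x : ℝ => Real.exp (-ε * x) * k x) atTop (nhds 0)) ∧
  ∀ ξ : ℂ, 0 < ξ.re →
    IntegrableOn (fun y : ℝ => Complex.exp (-ξ * (y : ℂ)) * (k (y - 1) : ℂ)) (Ioi 0) ∧
    (∫ y in Ioi (0 : ℝ), Complex.exp (-ξ * (y : ℂ)) * (k (y - 1) : ℂ)) = ξ / psiFn φ ξ

/-- Iterated antiderivatives: `kIter k 0 = k₋₁⁺` and `kIter k (n+1) = I₊ (kIter k n)`,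
so that `kₙ⁺ = kIter k (n+1)` for `n ≥ -1`. -/
def kIter (k : ℝ → ℝ) : ℕ → ℝ → ℝ
  | 0 => k
  | m + 1 => fun x => ∫ y in Iic x, kIter k m y

/-- The Lévy integral operator `I^ψ_+ f (x) = ∫_{-1}^x k₀⁺(x-y-1) f(y) dy`. -/
def Iop (k0 f : ℝ → ℝ) (x : ℝ) : ℝ := ∫ y in (-1 : ℝ)..x, k0 (x - y - 1) * f y

/-- Iterates `(I^ψ_+)ⁿ f`. -/
def IopIter (k0 f : ℝ → ℝ) : ℕ → ℝ → ℝ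
  | 0 => f
  | n + 1 => Iop k0 (IopIter k0 f n)

/-- The Mittag-Leffler type operator `E^{ψ,β}_+ f = Σ_{n≥0} βⁿ (I^ψ_+)ⁿ f`. -/
def MLop (k0 : ℝ → ℝ) (β : ℝ) (f : ℝ → ℝ) (x : ℝ) : ℝ :=
  ∑' n : ℕ, β ^ n * IopIter k0 f n x

section Volterra

variable {k0 f g : ℝ → ℝ} {K M β x : ℝ}

lemma Iop_eq_setIntegral (h0 : ∀ x ≤ -1, k0 x = 0) (f : ℝ → ℝ) (hx : x ∈ Icc (-1 : ℝ) 1) :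
    Iop k0 f x = ∫ y in Ioc (-1 : ℝ) 1, k0 (x - y - 1) * f y := by
  rw [Iop, intervalIntegral.integral_of_le hx.1]
  symm
  apply setIntegral_eq_of_subset_of_forall_sdiff_eq_zero measurableSet_Ioc
    (Ioc_subset_Ioc_right hx.2)
  intro y hy
  have : x < y := by
    by_contra! h
    exact hy.2 ⟨hy.1.1, h⟩
  rw [h0 _ (by linarith), zero_mul]

lemma integrableOn_kernel_mul (hc : Continuous k0) (hb : ∀ x ≤ 1, |k0 x| ≤ K)
    (hf : IntegrableOn f (Ioc (-1) 1)) (hx : x ≤ 1) :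
    IntegrableOn (fun y => k0 (x - y - 1) * f y) (Ioc (-1) 1) := by
  refine Integrable.bdd_mul (c := K) hf (by fun_prop) ?_
  filter_upwards [ae_restrict_mem measurableSet_Ioc] with y hy
  exact hb _ (by linarith [hy.1])

lemma continuousOn_Iop (hc : Continuous k0) (h0 : ∀ x ≤ -1, k0 x = 0)
    (hb : ∀ x ≤ 1, |k0 x| ≤ K) (hf : IntegrableOn f (Icc (-1) 1)) :
    ContinuousOn (Iop k0 f) (Icc (-1) 1) := by
  have hf' : IntegrableOn f (Ioc (-1) 1) := hf.mono_set Ioc_subset_Icc_self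
  refine ContinuousOn.congr ?_ (fun x hx => Iop_eq_setIntegral h0 f hx)
  refine continuousOn_of_dominated (bound := fun y => K * |f y|)
    (fun x hx => (integrableOn_kernel_mul hc hb hf' hx.2).aestronglyMeasurable) ?_
    (hf'.abs.const_mul K) (Eventually.of_forall fun y => by fun_prop)
  intro x hx
  filter_upwards [ae_restrict_mem measurableSet_Ioc] with y hy
  rw [Real.norm_eq_abs, abs_mul]
  gcongr
  exact hb _ (by linarith [hy.1, hx.2])

lemma abs_Iop_le (hb : ∀ x ≤ 1, |k0 x| ≤ K)
    (hf : IntegrableOn f (Icc (-1) 1)) (hx : x ∈ Icc (-1 : ℝ) 1) :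
    |Iop k0 f x| ≤ K * ∫ y in (-1 : ℝ)..x, |f y| := by
  have hfi : IntervalIntegrable f volume (-1) x := by
    rw [intervalIntegrable_iff_integrableOn_Ioc_of_le hx.1]
    exact hf.mono_set (Ioc_subset_Icc_self.trans (Icc_subset_Icc_right hx.2))
  rw [Iop, ← intervalIntegral.integral_const_mul, ← Real.norm_eq_abs]
  refine intervalIntegral.norm_integral_le_of_norm_le hx.1 ?_ (hfi.abs.const_mul K)
  refine Eventually.of_forall fun y hy => ?_
  rw [Real.norm_eq_abs, abs_mul]
  gcongr
  exact hb _ (by linarith [hy.1, hx.2])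

lemma abs_Iop_le_L1 (hb : ∀ x ≤ 1, |k0 x| ≤ K)
    (hf : IntegrableOn f (Icc (-1) 1)) (hx : x ∈ Icc (-1 : ℝ) 1) :
    |Iop k0 f x| ≤ K * ∫ y in Icc (-1 : ℝ) 1, |f y| := by
  have hK : 0 ≤ K := (abs_nonneg _).trans (hb 1 le_rfl)
  refine (abs_Iop_le hb hf hx).trans ?_
  gcongr
  rw [intervalIntegral.integral_of_le hx.1]
  exact setIntegral_mono_set hf.abs (Eventually.of_forall fun y => abs_nonneg _)
    (Ioc_subset_Icc_self.trans (Icc_subset_Icc_right hx.2)).eventuallyLE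

lemma abs_Iop_le_sup (hb : ∀ x ≤ 1, |k0 x| ≤ K)
    (hf : ContinuousOn f (Icc (-1) 1)) (hM : ∀ y ∈ Icc (-1 : ℝ) 1, |f y| ≤ M)
    (hx : x ∈ Icc (-1 : ℝ) 1) :
    |Iop k0 f x| ≤ 2 * K * M := by
  have hK : 0 ≤ K := (abs_nonneg _).trans (hb 1 le_rfl)
  refine (abs_Iop_le_L1 hb (hf.integrableOn_Icc) hx).trans ?_
  have : ∫ y in Icc (-1 : ℝ) 1, |f y| ≤ ∫ y in Icc (-1 : ℝ) 1, M :=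
    setIntegral_mono_on hf.abs.integrableOn_Icc (by simp) measurableSet_Icc hM
  rw [setIntegral_const] at this
  norm_num at this
  nlinarith

lemma integrableOn_IopIter (hc : Continuous k0) (h0 : ∀ x ≤ -1, k0 x = 0)
    (hb : ∀ x ≤ 1, |k0 x| ≤ K) (hf : IntegrableOn f (Icc (-1) 1)) (n : ℕ) :
    IntegrableOn (IopIter k0 f n) (Icc (-1) 1) := by
  induction n with
  | zero => exact hf
  | succ n ih => exact (continuousOn_Iop hc h0 hb ih).integrableOn_Icc

lemma IopIter_Iop (k0 f : ℝ → ℝ) (n : ℕ) :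
    IopIter k0 (Iop k0 f) n = IopIter k0 f (n + 1) := by
  induction n with
  | zero => rfl
  | succ n ih => exact congrArg (Iop k0) ih

lemma abs_IopIter_succ_le (hc : Continuous k0) (h0 : ∀ x ≤ -1, k0 x = 0)
    (hb : ∀ x ≤ 1, |k0 x| ≤ K) (hf : IntegrableOn f (Icc (-1) 1))
    (hM : ∀ y ∈ Icc (-1 : ℝ) 1, |Iop k0 f y| ≤ M) (n : ℕ) :
    ∀ x ∈ Icc (-1 : ℝ) 1,
      |IopIter k0 f (n + 1) x| ≤ M * (K * (1 + x)) ^ n / (n.factorial : ℝ) := by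
  have hK : 0 ≤ K := (abs_nonneg _).trans (hb 1 le_rfl)
  induction n with
  | zero => intro x hx; simpa [IopIter] using hM x hx
  | succ n ih =>
    intro x hx
    have hint := integrableOn_IopIter hc h0 hb hf (n + 1)
    refine (abs_Iop_le hb hint hx).trans ?_
    have hle : ∫ y in (-1 : ℝ)..x, |IopIter k0 f (n + 1) y| ≤
        ∫ y in (-1 : ℝ)..x, M * (K * (1 + y)) ^ n / (n.factorial : ℝ) := by
      refine intervalIntegral.integral_mono_on hx.1 ?_ ?_ ?_
      · rw [intervalIntegrable_iff_integrableOn_Ioc_of_le hx.1]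
        exact IntegrableOn.mono_set hint.abs (Ioc_subset_Icc_self.trans (Icc_subset_Icc_right hx.2))
      · exact Continuous.intervalIntegrable (by fun_prop) _ _
      · exact fun y hy => ih y ⟨hy.1, hy.2.trans hx.2⟩
    have hval : ∫ y in (-1 : ℝ)..x, M * (K * (1 + y)) ^ n / (n.factorial : ℝ) =
        M * K ^ n / (n.factorial : ℝ) * ((1 + x) ^ (n + 1) / (n + 1)) := by
      have h1 : ∀ y : ℝ, M * (K * (1 + y)) ^ n / (n.factorial : ℝ) =
          M * K ^ n / (n.factorial : ℝ) * (1 + y) ^ n := fun y => by rw [mul_pow]; ring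
      simp_rw [h1]
      rw [intervalIntegral.integral_const_mul,
        intervalIntegral.integral_comp_add_left (fun y : ℝ => y ^ n), integral_pow]
      norm_num
    calc K * ∫ y in (-1 : ℝ)..x, |IopIter k0 f (n + 1) y|
        ≤ K * (M * K ^ n / (n.factorial : ℝ) * ((1 + x) ^ (n + 1) / (n + 1))) := by
          rw [← hval]; gcongr
      _ = M * (K * (1 + x)) ^ (n + 1) / ((n + 1).factorial : ℝ) := by
          rw [Nat.factorial_succ, mul_pow]
          push_cast
          field_simp
          ring

lemma continuousOn_IopIter (hc : Continuous k0) (h0 : ∀ x ≤ -1, k0 x = 0)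
    (hb : ∀ x ≤ 1, |k0 x| ≤ K) (hf : IntegrableOn f (Icc (-1) 1)) {n : ℕ} (hn : 1 ≤ n) :
    ContinuousOn (IopIter k0 f n) (Icc (-1) 1) := by
  obtain ⟨n, rfl⟩ := Nat.exists_eq_add_of_le' hn
  exact continuousOn_Iop hc h0 hb (integrableOn_IopIter hc h0 hb hf n)

lemma hasSum_exp_majorant (M K β : ℝ) :
    HasSum (fun n : ℕ => M * ((2 * K * β) ^ n / (n.factorial : ℝ)))
      (M * Real.exp (2 * K * β)) := by
  rw [Real.exp_eq_exp_ℝ]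
  exact (NormedSpace.expSeries_div_hasSum_exp (2 * K * β)).mul_left M

lemma norm_term_le (hc : Continuous k0) (h0 : ∀ x ≤ -1, k0 x = 0)
    (hb : ∀ x ≤ 1, |k0 x| ≤ K) (hβ : 0 < β) (hf : IntegrableOn f (Icc (-1) 1))
    (hM : ∀ y ∈ Icc (-1 : ℝ) 1, |Iop k0 f y| ≤ M) (n : ℕ) (hx : x ∈ Icc (-1 : ℝ) 1) :
    ‖β ^ n * IopIter k0 (Iop k0 f) n x‖ ≤ M * ((2 * K * β) ^ n / (n.factorial : ℝ)) := by
  have hK : 0 ≤ K := (abs_nonneg _).trans (hb 1 le_rfl)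
  have hM0 : 0 ≤ M := (abs_nonneg _).trans (hM x hx)
  have hx1 : 0 ≤ 1 + x := by linarith [hx.1]
  rw [IopIter_Iop, norm_mul, norm_pow, Real.norm_of_nonneg hβ.le, Real.norm_eq_abs]
  calc β ^ n * |IopIter k0 f (n + 1) x|
      ≤ β ^ n * (M * (K * (1 + x)) ^ n / (n.factorial : ℝ)) := by
        gcongr; exact abs_IopIter_succ_le hc h0 hb hf hM n x hx
    _ ≤ β ^ n * (M * (K * 2) ^ n / (n.factorial : ℝ)) := by
        gcongr; linarith [hx.2]
    _ = M * ((2 * K * β) ^ n / (n.factorial : ℝ)) := by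
        simp only [mul_pow]; ring

lemma abs_MLop_Iop_le (hc : Continuous k0) (h0 : ∀ x ≤ -1, k0 x = 0)
    (hb : ∀ x ≤ 1, |k0 x| ≤ K) (hβ : 0 < β) (hf : IntegrableOn f (Icc (-1) 1))
    (hM : ∀ y ∈ Icc (-1 : ℝ) 1, |Iop k0 f y| ≤ M) (hx : x ∈ Icc (-1 : ℝ) 1) :
    |MLop k0 β (Iop k0 f) x| ≤ M * Real.exp (2 * K * β) :=
  tsum_of_norm_bounded (hasSum_exp_majorant M K β)
    (fun n => norm_term_le hc h0 hb hβ hf hM n hx)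

lemma continuousOn_MLop_Iop (hc : Continuous k0) (h0 : ∀ x ≤ -1, k0 x = 0)
    (hb : ∀ x ≤ 1, |k0 x| ≤ K) (hβ : 0 < β) (hf : IntegrableOn f (Icc (-1) 1)) :
    ContinuousOn (MLop k0 β (Iop k0 f)) (Icc (-1) 1) := by
  refine continuousOn_tsum (fun n => ?_) (hasSum_exp_majorant _ K β).summable
    (fun n x hx => norm_term_le hc h0 hb hβ hf (fun _ hy => abs_Iop_le_L1 hb hf hy) n hx)
  rw [IopIter_Iop]
  exact continuousOn_const.mul (continuousOn_IopIter hc h0 hb hf (Nat.le_add_left 1 n))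

lemma summable_MLop_Iop (hc : Continuous k0) (h0 : ∀ x ≤ -1, k0 x = 0)
    (hb : ∀ x ≤ 1, |k0 x| ≤ K) (hβ : 0 < β) (hf : IntegrableOn f (Icc (-1) 1))
    (hx : x ∈ Icc (-1 : ℝ) 1) :
    Summable (fun n : ℕ => β ^ n * IopIter k0 (Iop k0 f) n x) :=
  (hasSum_exp_majorant _ K β).summable.of_norm_bounded
    (fun n => norm_term_le hc h0 hb hβ hf (fun _ hy => abs_Iop_le_L1 hb hf hy) n hx)

lemma summable_MLop (hc : Continuous k0) (h0 : ∀ x ≤ -1, k0 x = 0)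
    (hb : ∀ x ≤ 1, |k0 x| ≤ K) (hβ : 0 < β) (hf : IntegrableOn f (Icc (-1) 1))
    (hx : x ∈ Icc (-1 : ℝ) 1) :
    Summable (fun n : ℕ => β ^ n * IopIter k0 f n x) := by
  rw [← summable_nat_add_iff 1]
  refine ((summable_MLop_Iop hc h0 hb hβ hf hx).mul_left β).congr fun n => ?_
  rw [IopIter_Iop, pow_succ]
  ring

lemma MLop_eq_add (hc : Continuous k0) (h0 : ∀ x ≤ -1, k0 x = 0)
    (hb : ∀ x ≤ 1, |k0 x| ≤ K) (hβ : 0 < β) (hf : IntegrableOn f (Icc (-1) 1))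
    (hx : x ∈ Icc (-1 : ℝ) 1) :
    MLop k0 β f x = f x + β * MLop k0 β (Iop k0 f) x := by
  rw [MLop, (summable_MLop hc h0 hb hβ hf hx).tsum_eq_zero_add, MLop, ← tsum_mul_left]
  congr 1
  · simp [IopIter]
  · refine tsum_congr fun n => ?_
    rw [IopIter_Iop, pow_succ]
    ring

lemma integrableOn_MLop (hc : Continuous k0) (h0 : ∀ x ≤ -1, k0 x = 0)
    (hb : ∀ x ≤ 1, |k0 x| ≤ K) (hβ : 0 < β) (hf : IntegrableOn f (Icc (-1) 1)) :
    IntegrableOn (MLop k0 β f) (Icc (-1) 1) :=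
  IntegrableOn.congr_fun
    (hf.add ((continuousOn_MLop_Iop hc h0 hb hβ hf).integrableOn_Icc.const_mul β))
    (fun _ hx => (MLop_eq_add hc h0 hb hβ hf hx).symm) measurableSet_Icc

lemma integral_abs_MLop_le (hc : Continuous k0) (h0 : ∀ x ≤ -1, k0 x = 0)
    (hb : ∀ x ≤ 1, |k0 x| ≤ K) (hβ : 0 < β) (hf : IntegrableOn f (Icc (-1) 1)) :
    ∫ x in Icc (-1 : ℝ) 1, |MLop k0 β f x| ≤
      (∫ x in Icc (-1 : ℝ) 1, |f x|) * (1 + 2 * K * β * Real.exp (2 * K * β)) := by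
  set S := ∫ x in Icc (-1 : ℝ) 1, |f x| with hS
  have hle : ∫ x in Icc (-1 : ℝ) 1, |MLop k0 β f x| ≤
      ∫ x in Icc (-1 : ℝ) 1, (|f x| + β * (K * S * Real.exp (2 * K * β))) := by
    refine setIntegral_mono_on (integrableOn_MLop hc h0 hb hβ hf).abs
      (hf.abs.add (integrable_const _)) measurableSet_Icc fun x hx => ?_
    rw [MLop_eq_add hc h0 hb hβ hf hx]
    refine (abs_add_le _ _).trans ?_
    rw [abs_mul, abs_of_pos hβ]
    gcongr
    exact abs_MLop_Iop_le hc h0 hb hβ hf (fun y hy => abs_Iop_le_L1 hb hf hy) hx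
  rw [integral_add hf.abs (integrable_const _), setIntegral_const] at hle
  norm_num at hle
  linarith

lemma MLop_Iop_eq_Iop_MLop (hc : Continuous k0) (h0 : ∀ x ≤ -1, k0 x = 0)
    (hb : ∀ x ≤ 1, |k0 x| ≤ K) (hβ : 0 < β) (hf : IntegrableOn f (Icc (-1) 1))
    (hx : x ∈ Icc (-1 : ℝ) 1) :
    MLop k0 β (Iop k0 f) x = Iop k0 (MLop k0 β f) x := by
  have hK : 0 ≤ K := (abs_nonneg _).trans (hb 1 le_rfl)
  have hint (n : ℕ) : IntegrableOn (fun y => β ^ n * IopIter k0 f n y) (Ioc (-1) 1) :=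
    ((integrableOn_IopIter hc h0 hb hf n).mono_set Ioc_subset_Icc_self).const_mul _
  have hsum : Summable fun n : ℕ => ∫ y in Ioc (-1 : ℝ) 1, |β ^ n * IopIter k0 f n y| := by
    rw [← summable_nat_add_iff 1]
    refine Summable.of_nonneg_of_le (fun n => integral_nonneg fun y => abs_nonneg _)
      (fun n => ?_) ((hasSum_exp_majorant
        (β * (K * ∫ y in Icc (-1 : ℝ) 1, |f y|)) K β).summable.mul_left 2)
    have : ∫ y in Ioc (-1 : ℝ) 1, |β ^ (n + 1) * IopIter k0 f (n + 1) y| ≤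
        ∫ y in Ioc (-1 : ℝ) 1, β * ((K * ∫ y in Icc (-1 : ℝ) 1, |f y|) *
          ((2 * K * β) ^ n / (n.factorial : ℝ))) := by
      refine setIntegral_mono_on (hint (n + 1)).abs (integrable_const _) measurableSet_Ioc fun y hy => ?_
      have := norm_term_le hc h0 hb hβ hf (fun _ hy => abs_Iop_le_L1 hb hf hy) n
        (Ioc_subset_Icc_self hy)
      rw [IopIter_Iop, Real.norm_eq_abs] at this
      rw [pow_succ', mul_assoc, abs_mul, abs_of_pos hβ]
      gcongr
    refine this.trans (le_of_eq ?_)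
    rw [setIntegral_const]
    norm_num
    ring
  have key := hasSum_integral_of_summable_integral_norm
    (μ := volume.restrict (Ioc (-1 : ℝ) 1))
    (F := fun n y => k0 (x - y - 1) * (β ^ n * IopIter k0 f n y))
    (fun n => integrableOn_kernel_mul hc hb (hint n) hx.2) ?_
  · rw [Iop_eq_setIntegral h0 _ hx]
    simp_rw [tsum_mul_left] at key
    rw [MLop]
    simp only [MLop, ← key.tsum_eq]
    refine tsum_congr fun n => ?_
    rw [IopIter_Iop, IopIter, Iop_eq_setIntegral h0 _ hx, ← integral_const_mul]
    exact integral_congr_ae (Eventually.of_forall fun y => by ring)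
  · refine Summable.of_nonneg_of_le (fun n => integral_nonneg fun y => norm_nonneg _)
      (fun n => ?_) (hsum.mul_left K)
    rw [← integral_const_mul]
    refine setIntegral_mono_on (integrableOn_kernel_mul hc hb (hint n) hx.2).norm
      ((hint n).abs.const_mul K) measurableSet_Ioc fun y hy => ?_
    rw [norm_mul]
    gcongr
    · exact hb _ (by linarith [hy.1, hx.2])
    · exact le_rfl

end Volterra

section Laplace

open ProbabilityTheory

/-- Two finite measures on `ℝ` whose moment generating functions are finite and agree on an open
convex neighbourhood of `0` coincide. -/
lemma measure_ext_of_mgf_eqOn {μ ν : Measure ℝ} [IsFiniteMeasure μ] [IsFiniteMeasure ν]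
    {s : Set ℝ} (hs : IsOpen s) (hconv : Convex ℝ s) (h0 : (0 : ℝ) ∈ s)
    (hμ : s ⊆ integrableExpSet id μ) (hν : s ⊆ integrableExpSet id ν)
    (h : EqOn (mgf id μ) (mgf id ν) s) : μ = ν := by
  have hsub {ρ : Measure ℝ} (hρ : s ⊆ integrableExpSet id ρ) :
      AnalyticOnNhd ℂ (complexMGF id ρ) (Complex.reLm ⁻¹' s) :=
    analyticOnNhd_complexMGF.mono fun z hz => interior_maximal hρ hs hz
  have heq : EqOn (complexMGF id μ) (complexMGF id ν) (Complex.reLm ⁻¹' s) := by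
    refine AnalyticOnNhd.eqOn_of_preconnected_of_frequently_eq (hsub hμ) (hsub hν)
      (hconv.linear_preimage Complex.reLm).isPreconnected (z₀ := ((0 : ℝ) : ℂ))
      (by simpa using h0) ?_
    have hreal : ∃ᶠ x : ℝ in 𝓝[≠] (0 : ℝ), complexMGF id μ x = complexMGF id ν x := by
      refine Eventually.frequently ?_
      filter_upwards [nhdsWithin_le_nhds (hs.mem_nhds h0)] with x hx
      rw [complexMGF_ofReal, complexMGF_ofReal, h hx]
    have hto : Tendsto (fun x : ℝ => (x : ℂ)) (𝓝[≠] (0 : ℝ)) (𝓝[≠] ((0 : ℝ) : ℂ)) := by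
      refine tendsto_nhdsWithin_iff.2 ⟨?_, ?_⟩
      · exact (Complex.continuous_ofReal.tendsto 0).mono_left nhdsWithin_le_nhds
      · filter_upwards [self_mem_nhdsWithin] with x hx
        simpa using hx
    exact hto.frequently hreal
  refine Measure.ext_of_charFun (funext fun t => ?_)
  rw [← complexMGF_id_mul_I, ← complexMGF_id_mul_I]
  exact heq (by simpa using h0)

/-- The measure `e^{-y} P(y) dy` on `(0, ∞)`. -/
def expWeighted (P : ℝ → ℝ) : Measure ℝ :=
  (volume.restrict (Ioi 0)).withDensity fun y => ENNReal.ofReal (Real.exp (-y) * P y)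

variable {P Q : ℝ → ℝ}

/-- `P` is nonnegative on `(0, ∞)` with finite Laplace transform there. -/
def IsLaplaceKernel (P : ℝ → ℝ) : Prop :=
  (∀ y, 0 < y → 0 ≤ P y) ∧
    ∀ s : ℝ, 0 < s → IntegrableOn (fun y => Real.exp (-s * y) * P y) (Ioi 0)

lemma IsLaplaceKernel.integrableOn (hP : IsLaplaceKernel P) :
    IntegrableOn (fun y => Real.exp (-y) * P y) (Ioi 0) := by
  simpa using hP.2 1 one_pos

lemma IsLaplaceKernel.aemeasurable (hP : IsLaplaceKernel P) :
    AEMeasurable (fun y => ENNReal.ofReal (Real.exp (-y) * P y)) (volume.restrict (Ioi 0)) :=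
  hP.integrableOn.aestronglyMeasurable.aemeasurable.ennreal_ofReal

lemma IsLaplaceKernel.toReal_smul_ae_eq (hP : IsLaplaceKernel P) (F : ℝ → ℝ) :
    (fun y => (ENNReal.ofReal (Real.exp (-y) * P y)).toReal • F y)
      =ᵐ[volume.restrict (Ioi 0)] fun y => Real.exp (-y) * P y * F y := by
  filter_upwards [ae_restrict_mem measurableSet_Ioi] with y hy
  rw [ENNReal.toReal_ofReal (mul_nonneg (Real.exp_pos _).le (hP.1 y hy)), smul_eq_mul]

lemma IsLaplaceKernel.integrable_expWeighted_iff (hP : IsLaplaceKernel P) (F : ℝ → ℝ) :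
    Integrable F (expWeighted P) ↔
      IntegrableOn (fun y => Real.exp (-y) * P y * F y) (Ioi 0) := by
  rw [expWeighted, integrable_withDensity_iff_integrable_smul₀' hP.aemeasurable
    (Eventually.of_forall fun _ => ENNReal.ofReal_lt_top)]
  exact integrable_congr (hP.toReal_smul_ae_eq F)

lemma IsLaplaceKernel.integral_expWeighted (hP : IsLaplaceKernel P) (F : ℝ → ℝ) :
    ∫ y, F y ∂(expWeighted P) = ∫ y in Ioi (0 : ℝ), Real.exp (-y) * P y * F y := by
  rw [expWeighted, integral_withDensity_eq_integral_toReal_smul₀ hP.aemeasurable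
    (Eventually.of_forall fun _ => ENNReal.ofReal_lt_top)]
  exact integral_congr_ae (hP.toReal_smul_ae_eq F)

lemma IsLaplaceKernel.isFiniteMeasure (hP : IsLaplaceKernel P) :
    IsFiniteMeasure (expWeighted P) :=
  isFiniteMeasure_withDensity_ofReal hP.integrableOn.2

lemma IsLaplaceKernel.integrable_exp (hP : IsLaplaceKernel P) {t : ℝ} (ht : t < 1) :
    Integrable (fun y => Real.exp (t * y)) (expWeighted P) := by
  rw [hP.integrable_expWeighted_iff]
  refine (hP.2 (1 - t) (by linarith)).congr (Eventually.of_forall fun y => ?_)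
  dsimp only
  rw [mul_right_comm, ← Real.exp_add]
  ring_nf

lemma IsLaplaceKernel.integral_exp (hP : IsLaplaceKernel P) (t : ℝ) :
    ∫ y, Real.exp (t * y) ∂(expWeighted P) =
      ∫ y in Ioi (0 : ℝ), Real.exp (-(1 - t) * y) * P y := by
  rw [hP.integral_expWeighted]
  refine integral_congr_ae (Eventually.of_forall fun y => ?_)
  dsimp only
  rw [mul_right_comm, ← Real.exp_add]
  ring_nf

lemma integral_exp_neg_mul {s : ℝ} (hs : 0 < s) :
    ∫ y in Ioi (0 : ℝ), Real.exp (-s * y) * (1 : ℝ) = 1 / s := by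
  simp only [mul_one]
  rw [integral_exp_mul_Ioi (by linarith) 0]
  simp

lemma isLaplaceKernel_one : IsLaplaceKernel fun _ => 1 := by
  refine ⟨fun _ _ => zero_le_one, fun s hs => ?_⟩
  simp only [mul_one]
  exact integrableOn_exp_mul_Ioi (by linarith) 0

/-- If the Laplace transforms of `P` and `Q` have product `1 / s`, then `P * Q = 1` on `(0, ∞)`,
expressed as a convolution of measures. -/
lemma conv_expWeighted_eq (hP : IsLaplaceKernel P) (hQ : IsLaplaceKernel Q)
    (h : ∀ s : ℝ, 0 < s → (∫ y in Ioi (0 : ℝ), Real.exp (-s * y) * P y) *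
      (∫ y in Ioi (0 : ℝ), Real.exp (-s * y) * Q y) = 1 / s) :
    ((expWeighted P).prod (expWeighted Q)).map (fun p => p.1 + p.2) =
      expWeighted fun _ => 1 := by
  have := hP.isFiniteMeasure
  have := hQ.isFiniteMeasure
  have := isLaplaceKernel_one.isFiniteMeasure
  have hmul (t : ℝ) : (fun p : ℝ × ℝ => Real.exp (t * (p.1 + p.2))) =
      fun p => Real.exp (t * p.1) * Real.exp (t * p.2) := by
    ext p; rw [mul_add, Real.exp_add]
  refine measure_ext_of_mgf_eqOn (s := Iio 1) isOpen_Iio (convex_Iio 1) (by simp) ?_ ?_ ?_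
  · intro t ht
    rw [integrableExpSet, mem_ofPred_eq,
      integrable_map_measure (by fun_prop) (by fun_prop)]
    simp only [Function.comp_def, id]
    rw [hmul]
    exact (hP.integrable_exp ht).mul_prod (hQ.integrable_exp ht)
  · exact fun t ht => isLaplaceKernel_one.integrable_exp ht
  · intro t ht
    have ht' : 0 < 1 - t := by linarith [mem_Iio.1 ht]
    simp only [mgf, id]
    rw [integral_map (by fun_prop) (by fun_prop), hmul,
      integral_prod_mul (fun x => Real.exp (t * x)) (fun x => Real.exp (t * x)),
      hP.integral_exp, hQ.integral_exp, h _ ht',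
      isLaplaceKernel_one.integral_exp, integral_exp_neg_mul ht']

/-- The resolvent identity `P * (Q * H) = 1 * H` at every point. -/
lemma integral_kernel_integral_kernel (hP : IsLaplaceKernel P) (hQ : IsLaplaceKernel Q)
    (h : ∀ s : ℝ, 0 < s → (∫ y in Ioi (0 : ℝ), Real.exp (-s * y) * P y) *
      (∫ y in Ioi (0 : ℝ), Real.exp (-s * y) * Q y) = 1 / s)
    {H : ℝ → ℝ} (hH : Integrable H) (z : ℝ) :
    ∫ y in Ioi (0 : ℝ), P y * ∫ s in Ioi (0 : ℝ), Q s * H (z - y - s) =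
      ∫ t in Ioi (0 : ℝ), H (z - t) := by
  have := hP.isFiniteMeasure
  have := hQ.isFiniteMeasure
  set F : ℝ → ℝ := fun t => Real.exp t * H (z - t) with hF
  have hHz : IntegrableOn (fun t => H (z - t)) (Ioi 0) :=
    (hH.comp_sub_left z).integrableOn
  have hFC : Integrable F (expWeighted fun _ => 1) := by
    rw [isLaplaceKernel_one.integrable_expWeighted_iff]
    refine hHz.congr (Eventually.of_forall fun t => ?_)
    simp only [hF]
    rw [mul_one, ← mul_assoc, ← Real.exp_add]
    simp
  have hFint : ∫ t, F t ∂(expWeighted fun _ => 1) = ∫ t in Ioi (0 : ℝ), H (z - t) := by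
    rw [isLaplaceKernel_one.integral_expWeighted]
    refine integral_congr_ae (Eventually.of_forall fun t => ?_)
    simp only [hF]
    rw [mul_one, ← mul_assoc, ← Real.exp_add]
    simp
  rw [← hFint]
  rw [← conv_expWeighted_eq hP hQ h] at hFC ⊢
  have hFprod : Integrable (fun p : ℝ × ℝ => F (p.1 + p.2))
      ((expWeighted P).prod (expWeighted Q)) :=
    (integrable_map_measure hFC.1 (by fun_prop)).1 hFC
  rw [integral_map (by fun_prop) hFC.1, integral_prod _ hFprod, hP.integral_expWeighted]
  refine integral_congr_ae (Eventually.of_forall fun y => ?_)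
  dsimp only
  rw [hQ.integral_expWeighted, mul_comm (Real.exp (-y)), mul_assoc,
    ← integral_const_mul (Real.exp (-y))]
  congr 1
  refine integral_congr_ae (Eventually.of_forall fun s => ?_)
  simp only [hF]
  rw [Real.exp_add, Real.exp_neg, Real.exp_neg, sub_sub]
  field_simp

end Laplace

section LevyMeasure

variable {φ : Measure ℝ} {s : ℝ}

/-- The function `Φ` with values in `[0, ∞]`. -/
def tailLIntegral (φ : Measure ℝ) (x : ℝ) : ENNReal := ∫⁻ y in Ioi x, φ (Ioi y)

lemma measurable_measure_Ioi (φ : Measure ℝ) : Measurable fun y => φ (Ioi y) :=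
  Antitone.measurable fun _ _ h => measure_mono (Ioi_subset_Ioi h)

lemma antitone_tailLIntegral (φ : Measure ℝ) : Antitone (tailLIntegral φ) :=
  fun _ _ h => lintegral_mono_set (Ioi_subset_Ioi h)

/-- `∫_0^t e^{-s x} dx`. -/
def expPrimitive (s t : ℝ) : ℝ := ∫ x in (0 : ℝ)..t, Real.exp (-s * x)

lemma continuous_expPrimitive (s : ℝ) : Continuous (expPrimitive s) :=
  intervalIntegral.continuous_primitive
    (fun _ _ => Continuous.intervalIntegrable (by fun_prop) _ _) 0

lemma expPrimitive_pos (s : ℝ) {t : ℝ} (ht : 0 < t) : 0 < expPrimitive s t :=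
  intervalIntegral.intervalIntegral_pos_of_pos
    (Continuous.intervalIntegrable (by fun_prop) _ _) (fun _ => Real.exp_pos _) ht

lemma expPrimitive_nonneg (s : ℝ) {t : ℝ} (ht : 0 ≤ t) : 0 ≤ expPrimitive s t :=
  intervalIntegral.integral_nonneg ht fun _ _ => (Real.exp_pos _).le

lemma expPrimitive_le_inv (hs : 0 < s) {t : ℝ} (ht : 0 ≤ t) : expPrimitive s t ≤ 1 / s := by
  rw [expPrimitive, intervalIntegral.integral_of_le ht, ← integral_exp_neg_mul hs]
  simp only [mul_one]
  exact setIntegral_mono_set (integrableOn_exp_mul_Ioi (by linarith) 0)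
    (Eventually.of_forall fun _ => (Real.exp_pos _).le) Ioc_subset_Ioi_self.eventuallyLE

lemma expPrimitive_le_self (hs : 0 < s) {t : ℝ} (ht : 0 ≤ t) : expPrimitive s t ≤ t := by
  have : expPrimitive s t ≤ ∫ _ in (0 : ℝ)..t, (1 : ℝ) := by
    refine intervalIntegral.integral_mono_on ht
      (Continuous.intervalIntegrable (by fun_prop) _ _) (by simp) fun x hx => ?_
    rw [Real.exp_le_one_iff]
    nlinarith [hx.1]
  simpa using this

lemma integral_expPrimitive_pos (s : ℝ) {z : ℝ} (hz : 0 < z) :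
    0 < ∫ t in (0 : ℝ)..z, expPrimitive s t :=
  intervalIntegral.intervalIntegral_pos_of_pos_on
    ((continuous_expPrimitive s).intervalIntegrable _ _)
    (fun _ ht => expPrimitive_pos s ht.1) hz

lemma integral_expPrimitive_le (hs : 0 < s) {z : ℝ} (hz : 0 < z) :
    ∫ t in (0 : ℝ)..z, expPrimitive s t ≤ (1 + 1 / s) * min (z ^ 2) z := by
  have hs' : 0 < 1 / s := by positivity
  have key (C : ℝ) (hC : ∀ t ∈ Icc 0 z, expPrimitive s t ≤ C) :
      ∫ t in (0 : ℝ)..z, expPrimitive s t ≤ z * C := by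
    have := intervalIntegral.integral_mono_on hz.le
      ((continuous_expPrimitive s).intervalIntegrable _ _)
      (intervalIntegrable_const : IntervalIntegrable (fun _ => C) volume 0 z) hC
    simpa using this
  rcases min_cases (z ^ 2) z with ⟨h, _⟩ | ⟨h, _⟩ <;> rw [h]
  · have := key z fun t ht => (expPrimitive_le_self hs ht.1).trans ht.2
    nlinarith [sq_nonneg z]
  · have := key (1 / s) fun t ht => expPrimitive_le_inv hs ht.1
    nlinarith

lemma lintegral_exp_mul_tail_eq (hφ : φ (Iic 0) = 0) (s : ℝ) :
    ∫⁻ x in Ioi (0 : ℝ), ENNReal.ofReal (Real.exp (-s * x)) * tailLIntegral φ x =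
      ∫⁻ z, ENNReal.ofReal (∫ t in (0 : ℝ)..z, expPrimitive s t) ∂φ := by
  have hpos : ∀ᵐ z ∂φ, 0 < z := by
    rw [ae_iff]
    convert hφ using 2
    ext z; simp
  have hlayer := lintegral_comp_eq_lintegral_meas_lt_mul φ (f := fun z => z)
    (g := expPrimitive s) (by filter_upwards [hpos] with z hz using hz.le) (by fun_prop)
    (fun t _ => (continuous_expPrimitive s).intervalIntegrable _ _)
    (by filter_upwards [ae_restrict_mem measurableSet_Ioi] with t ht
        exact expPrimitive_nonneg s (le_of_lt ht))
  rw [hlayer]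
  have hmeas : Measurable fun p : ℝ × ℝ =>
      (Ioi p.1).indicator (fun y => ENNReal.ofReal (Real.exp (-s * p.1)) * φ (Ioi y)) p.2 := by
    have : (fun p : ℝ × ℝ =>
        (Ioi p.1).indicator (fun y => ENNReal.ofReal (Real.exp (-s * p.1)) * φ (Ioi y)) p.2) =
        {p : ℝ × ℝ | p.1 < p.2}.indicator
          fun p => ENNReal.ofReal (Real.exp (-s * p.1)) * φ (Ioi p.2) := by
      ext p; simp [indicator]
    rw [this]
    refine Measurable.indicator ?_ (measurableSet_lt measurable_fst measurable_snd)
    exact Measurable.mul (by fun_prop) ((measurable_measure_Ioi φ).comp measurable_snd)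
  calc ∫⁻ x in Ioi (0 : ℝ), ENNReal.ofReal (Real.exp (-s * x)) * tailLIntegral φ x
      = ∫⁻ x in Ioi (0 : ℝ), ∫⁻ y in Ioi (0 : ℝ), (Ioi x).indicator
          (fun y => ENNReal.ofReal (Real.exp (-s * x)) * φ (Ioi y)) y := by
        refine setLIntegral_congr_fun measurableSet_Ioi fun x hx => ?_
        rw [lintegral_indicator measurableSet_Ioi, Measure.restrict_restrict measurableSet_Ioi,
          inter_eq_left.2 (Ioi_subset_Ioi (le_of_lt hx)), tailLIntegral,
          lintegral_const_mul _ (measurable_measure_Ioi φ)]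
    _ = ∫⁻ y in Ioi (0 : ℝ), ∫⁻ x in Ioi (0 : ℝ), (Ioi x).indicator
          (fun y => ENNReal.ofReal (Real.exp (-s * x)) * φ (Ioi y)) y :=
        lintegral_lintegral_swap hmeas.aemeasurable
    _ = ∫⁻ y in Ioi (0 : ℝ), φ {z | y < z} * ENNReal.ofReal (expPrimitive s y) := by
        refine setLIntegral_congr_fun measurableSet_Ioi fun y hy => ?_
        have hind : (fun x => (Ioi x).indicator
            (fun y => ENNReal.ofReal (Real.exp (-s * x)) * φ (Ioi y)) y) =
            (Iio y).indicator fun x => φ (Ioi y) * ENNReal.ofReal (Real.exp (-s * x)) := by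
          ext x; simp [indicator, mul_comm]
        rw [hind, lintegral_indicator measurableSet_Iio,
          Measure.restrict_restrict measurableSet_Iio, lintegral_const_mul _ (by fun_prop),
          Iio_inter_Ioi, expPrimitive, intervalIntegral.integral_of_le (le_of_lt hy),
          integral_Ioc_eq_integral_Ioo, ofReal_integral_eq_lintegral_ofReal]
        · rfl
        · exact (Continuous.integrableOn_Icc (by fun_prop)).mono_set Ioo_subset_Icc_self
        · exact Eventually.of_forall fun _ => (Real.exp_pos _).le

lemma H0.ae_pos (h : H0 φ) : ∀ᵐ z ∂φ, 0 < z := by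
  rw [ae_iff]
  convert h.1 using 2
  ext z; simp

lemma H0.lintegral_exp_mul_tail_lt_top (h : H0 φ) (hs : 0 < s) :
    ∫⁻ x in Ioi (0 : ℝ), ENNReal.ofReal (Real.exp (-s * x)) * tailLIntegral φ x < ⊤ := by
  have hs' : 0 ≤ 1 + 1 / s := by positivity
  have hrestr : φ.restrict (Ioi 0) = φ := Measure.restrict_eq_self_of_ae_mem h.ae_pos
  rw [lintegral_exp_mul_tail_eq h.1]
  calc ∫⁻ z, ENNReal.ofReal (∫ t in (0 : ℝ)..z, expPrimitive s t) ∂φ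
      ≤ ∫⁻ z, ENNReal.ofReal (1 + 1 / s) * ENNReal.ofReal (min (z ^ 2) z) ∂φ := by
        refine lintegral_mono_ae ?_
        filter_upwards [h.ae_pos] with z hz
        rw [← ENNReal.ofReal_mul hs']
        exact ENNReal.ofReal_le_ofReal (integral_expPrimitive_le hs hz)
    _ < ⊤ := by
        rw [lintegral_const_mul _ (by fun_prop)]
        have := h.2.1
        rw [hrestr] at this
        exact ENNReal.mul_lt_top ENNReal.ofReal_lt_top this

lemma H0.lintegral_exp_mul_tail_ne_zero (h : H0 φ) (s : ℝ) :
    ∫⁻ x in Ioi (0 : ℝ), ENNReal.ofReal (Real.exp (-s * x)) * tailLIntegral φ x ≠ 0 := by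
  rw [lintegral_exp_mul_tail_eq h.1]
  intro h0
  have hprim : Continuous fun z => ∫ t in (0 : ℝ)..z, expPrimitive s t :=
    intervalIntegral.continuous_primitive
      (fun _ _ => (continuous_expPrimitive s).intervalIntegrable _ _) 0
  rw [lintegral_eq_zero_iff hprim.measurable.ennreal_ofReal] at h0
  have hfalse : ∀ᵐ z ∂φ, False := by
    filter_upwards [h0, h.ae_pos] with z hz hz'
    have := integral_expPrimitive_pos s hz'
    simp only [Pi.zero_apply, ENNReal.ofReal_eq_zero] at hz
    linarith
  have hφ : φ = 0 := by simpa using hfalse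
  have := h.2.2
  simp [hφ] at this

lemma H0.tailLIntegral_lt_top (h : H0 φ) {x : ℝ} (hx : 0 < x) : tailLIntegral φ x < ⊤ := by
  have hfin := (h.lintegral_exp_mul_tail_lt_top one_pos).ne
  have hle : (∫⁻ y in Ioo 0 x, ENNReal.ofReal (Real.exp (-1 * y))) * tailLIntegral φ x ≤
      ∫⁻ y in Ioi (0 : ℝ), ENNReal.ofReal (Real.exp (-1 * y)) * tailLIntegral φ y := by
    rw [← lintegral_mul_const _ (by fun_prop)]
    calc _ ≤ ∫⁻ y in Ioo 0 x, ENNReal.ofReal (Real.exp (-1 * y)) * tailLIntegral φ y := by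
          refine setLIntegral_mono' measurableSet_Ioo fun y hy => ?_
          gcongr
          exact antitone_tailLIntegral φ hy.2.le
      _ ≤ _ := lintegral_mono_set Ioo_subset_Ioi_self
  refine lt_top_iff_ne_top.2 fun htop => hfin (top_le_iff.1 (le_trans ?_ hle))
  rw [htop, ENNReal.mul_top]
  rw [← ofReal_integral_eq_lintegral_ofReal
    ((Continuous.integrableOn_Icc (by fun_prop)).mono_set Ioo_subset_Icc_self)
    (Eventually.of_forall fun _ => (Real.exp_pos _).le), ← integral_Ioc_eq_integral_Ioo,
    ← intervalIntegral.integral_of_le hx.le]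
  exact (ENNReal.ofReal_pos.2 (expPrimitive_pos 1 hx)).ne'

lemma H0.PhiFn_eq (h : H0 φ) {x : ℝ} (hx : 0 < x) :
    PhiFn φ x = (tailLIntegral φ x).toReal := by
  rw [PhiFn, if_pos hx, tailLIntegral]
  exact integral_toReal (measurable_measure_Ioi φ).aemeasurable
    (ae_lt_top (measurable_measure_Ioi φ) (h.tailLIntegral_lt_top hx).ne)

lemma H0.ofReal_exp_mul_PhiFn (h : H0 φ) (s : ℝ) {x : ℝ} (hx : 0 < x) :
    ENNReal.ofReal (Real.exp (-s * x) * PhiFn φ x) =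
      ENNReal.ofReal (Real.exp (-s * x)) * tailLIntegral φ x := by
  rw [ENNReal.ofReal_mul (Real.exp_pos _).le, h.PhiFn_eq hx,
    ENNReal.ofReal_toReal (h.tailLIntegral_lt_top hx).ne]

lemma H0.isLaplaceKernel_PhiFn (h : H0 φ) : IsLaplaceKernel (PhiFn φ) := by
  refine ⟨fun y hy => by rw [h.PhiFn_eq hy]; exact ENNReal.toReal_nonneg, fun s hs => ⟨?_, ?_⟩⟩
  · have : Measurable fun x => Real.exp (-s * x) * (tailLIntegral φ x).toReal :=
      Measurable.mul (by fun_prop) (antitone_tailLIntegral φ).measurable.ennreal_toReal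
    refine this.aestronglyMeasurable.congr ?_
    filter_upwards [ae_restrict_mem measurableSet_Ioi] with x hx
    rw [h.PhiFn_eq hx]
  · rw [hasFiniteIntegral_iff_ofReal]
    · rw [setLIntegral_congr_fun measurableSet_Ioi fun x hx => h.ofReal_exp_mul_PhiFn s hx]
      exact h.lintegral_exp_mul_tail_lt_top hs
    · filter_upwards [ae_restrict_mem measurableSet_Ioi] with x hx
      rw [h.PhiFn_eq hx]
      positivity

lemma H0.integral_exp_mul_PhiFn_ne_zero (h : H0 φ) (hs : 0 < s) :
    ∫ x in Ioi (0 : ℝ), Real.exp (-s * x) * PhiFn φ x ≠ 0 := by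
  intro h0
  have hnn : 0 ≤ᵐ[volume.restrict (Ioi 0)] fun x => Real.exp (-s * x) * PhiFn φ x := by
    filter_upwards [ae_restrict_mem measurableSet_Ioi] with x hx
    rw [h.PhiFn_eq hx]
    positivity
  have := ofReal_integral_eq_lintegral_ofReal (h.isLaplaceKernel_PhiFn.2 s hs) hnn
  rw [h0, ENNReal.ofReal_zero,
    setLIntegral_congr_fun measurableSet_Ioi fun x hx => h.ofReal_exp_mul_PhiFn s hx] at this
  exact h.lintegral_exp_mul_tail_ne_zero s this.symm

lemma psiFn_ofReal (φ : Measure ℝ) (s : ℝ) :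
    psiFn φ s =
      ((s ^ 2 * ∫ x in Ioi (0 : ℝ), Real.exp (-s * x) * PhiFn φ x : ℝ) : ℂ) := by
  rw [psiFn, Complex.ofReal_mul, ← integral_complex_ofReal]
  push_cast
  rfl

variable {k : ℝ → ℝ}

lemma IsScaleKernel.isLaplaceKernel (hk : IsScaleKernel φ k) :
    IsLaplaceKernel fun y => k (y - 1) := by
  refine ⟨fun y hy => hk.2.1 _ (by linarith), fun s hs => ?_⟩
  have := ((hk.2.2.2.2.2 (s : ℂ) (by simpa using hs)).1).re
  refine this.congr (Eventually.of_forall fun y => ?_)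
  dsimp only
  rw [← Complex.ofReal_neg, ← Complex.ofReal_mul, ← Complex.ofReal_exp, ← Complex.ofReal_mul]
  rfl

lemma IsScaleKernel.integral_exp_mul (hk : IsScaleKernel φ k) (hs : 0 < s) :
    ∫ y in Ioi (0 : ℝ), Real.exp (-s * y) * k (y - 1) =
      s / (s ^ 2 * ∫ x in Ioi (0 : ℝ), Real.exp (-s * x) * PhiFn φ x) := by
  have := (hk.2.2.2.2.2 (s : ℂ) (by simpa using hs)).2
  rw [psiFn_ofReal] at this
  apply Complex.ofReal_injective
  rw [Complex.ofReal_div, ← this, ← integral_complex_ofReal]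
  push_cast
  rfl

lemma laplace_PhiFn_mul_laplace_kernel (h : H0 φ) (hk : IsScaleKernel φ k) (hs : 0 < s) :
    (∫ y in Ioi (0 : ℝ), Real.exp (-s * y) * PhiFn φ y) *
      (∫ y in Ioi (0 : ℝ), Real.exp (-s * y) * k (y - 1)) = 1 / s := by
  rw [hk.integral_exp_mul hs]
  have hne := h.integral_exp_mul_PhiFn_ne_zero hs
  generalize ∫ y in Ioi (0 : ℝ), Real.exp (-s * y) * PhiFn φ y = L at hne ⊢
  field_simp

end LevyMeasure

section ScaleKernel

variable {φ : Measure ℝ} {k h : ℝ → ℝ} {x : ℝ}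

lemma IsScaleKernel.intervalIntegrable (hk : IsScaleKernel φ k) (a b : ℝ) :
    IntervalIntegrable k volume a b := by
  rw [intervalIntegrable_iff]
  have h1 : IntegrableOn k (Icc (-1) (max a b)) :=
    hk.2.2.2.1.integrableOn_compact_subset Icc_subset_Ici_self isCompact_Icc
  have h2 : IntegrableOn k (Iio (-1)) :=
    integrableOn_zero.congr_fun (fun y hy => (hk.1 y hy).symm) measurableSet_Iio
  refine (h2.union h1).mono_set fun y hy => ?_
  rcases lt_or_ge y (-1) with h | h
  · exact Or.inl h
  · exact Or.inr ⟨h, hy.2⟩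

lemma IsScaleKernel.kIter_one_eq (hk : IsScaleKernel φ k) (x : ℝ) :
    kIter k 1 x = ∫ y in (-1 : ℝ)..x, k y := by
  have h2 : IntegrableOn k (Iic (-1)) := by
    rw [integrableOn_Iic_iff_integrableOn_Iio]
    exact integrableOn_zero.congr_fun (fun y hy => (hk.1 y hy).symm) measurableSet_Iio
  have h3 : ∫ y in Iic (-1 : ℝ), k y = 0 := by
    rw [integral_Iic_eq_integral_Iio]
    exact setIntegral_eq_zero_of_forall_eq_zero fun y hy => hk.1 y hy
  have hx : IntegrableOn k (Iic x) :=
    (h2.union (intervalIntegrable_iff.1 (hk.intervalIntegrable (-1) x))).mono_set fun y hy => by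
      rcases le_or_gt y (-1) with h | h
      · exact Or.inl h
      · exact Or.inr ⟨by simp [h], le_max_of_le_right hy⟩
  rw [← intervalIntegral.integral_Iic_sub_Iic h2 hx, h3, sub_zero]
  rfl

lemma IsScaleKernel.continuous_kIter_one (hk : IsScaleKernel φ k) :
    Continuous (kIter k 1) := by
  rw [funext hk.kIter_one_eq]
  exact intervalIntegral.continuous_primitive hk.intervalIntegrable (-1)

lemma IsScaleKernel.kIter_one_eq_zero (hk : IsScaleKernel φ k) (hx : x ≤ -1) :
    kIter k 1 x = 0 := by
  change ∫ y in Iic x, k y = 0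
  rw [integral_Iic_eq_integral_Iio]
  exact setIntegral_eq_zero_of_forall_eq_zero fun y hy => hk.1 y (lt_of_lt_of_le hy hx)

lemma IsScaleKernel.abs_kIter_one_le (hk : IsScaleKernel φ k) (hx : x ≤ 1) :
    |kIter k 1 x| ≤ kIter k 1 1 := by
  have hnn : ∀ y, 0 ≤ k y := fun y =>
    (lt_or_ge y (-1)).elim (fun h => (hk.1 y h).ge) (hk.2.1 y)
  have hmono : kIter k 1 1 - kIter k 1 x = ∫ y in x..1, k y := by
    rw [hk.kIter_one_eq, hk.kIter_one_eq]
    exact intervalIntegral.integral_interval_sub_left (hk.intervalIntegrable _ _)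
      (hk.intervalIntegrable _ _)
  have h1 : 0 ≤ ∫ y in x..1, k y := intervalIntegral.integral_nonneg hx fun y _ => hnn y
  have h2 : 0 ≤ kIter k 1 x := integral_nonneg hnn
  rw [abs_of_nonneg h2]
  linarith

/-- The density of `I^ψ_+ h`: the convolution of `k₋₁⁺(· - 1)` with `h` on `(-1, 1]`. -/
def IopDensity (k h : ℝ → ℝ) (t : ℝ) : ℝ :=
  ∫ s in Ioi (0 : ℝ), k (s - 1) * (Ioc (-1 : ℝ) 1).indicator h (t - s)

lemma IopDensity_eq_zero (k h : ℝ → ℝ) {t : ℝ} (ht : t ≤ -1) : IopDensity k h t = 0 := by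
  refine setIntegral_eq_zero_of_forall_eq_zero fun s hs => ?_
  rw [indicator_of_notMem, mul_zero]
  intro hts
  linarith [hts.1, mem_Ioi.1 hs]

lemma IsScaleKernel.integrable_truncated (hk : IsScaleKernel φ k) :
    Integrable ((Ioc (0 : ℝ) 2).indicator fun s => k (s - 1)) := by
  rw [integrable_indicator_iff measurableSet_Ioc, ← intervalIntegrable_iff_integrableOn_Ioc_of_le
    zero_le_two]
  simpa using (hk.intervalIntegrable (0 - 1) (2 - 1)).comp_sub_right 1

lemma IopDensity_eq_convolution (k h : ℝ → ℝ) {t : ℝ} (ht : t ≤ 1) :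
    IopDensity k h t = ∫ y, (Ioc (-1 : ℝ) 1).indicator h y *
      (Ioc (0 : ℝ) 2).indicator (fun s => k (s - 1)) (t - y) := by
  rw [← integral_sub_left_eq_self _ volume t, IopDensity, ← integral_indicator measurableSet_Ioi]
  refine integral_congr_ae (Eventually.of_forall fun s => ?_)
  simp only [sub_sub_cancel]
  by_cases hs : s ∈ Ioi (0 : ℝ)
  · rw [indicator_of_mem hs]
    by_cases hs2 : s ≤ 2
    · rw [indicator_of_mem (show s ∈ Ioc (0 : ℝ) 2 from ⟨hs, hs2⟩), mul_comm]
    · rw [indicator_of_notMem (s := Ioc (-1 : ℝ) 1), mul_zero, zero_mul]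
      intro hts
      linarith [hts.1]
  · rw [indicator_of_notMem hs, indicator_of_notMem (s := Ioc (0 : ℝ) 2) (fun h => hs h.1), mul_zero]

lemma integrable_indicator_Ioc (hh : IntegrableOn h (Icc (-1) 1)) :
    Integrable ((Ioc (-1 : ℝ) 1).indicator h) :=
  (hh.mono_set Ioc_subset_Icc_self).integrable_indicator measurableSet_Ioc

lemma IsScaleKernel.integrable_convolution_integrand (hk : IsScaleKernel φ k)
    (hh : IntegrableOn h (Icc (-1) 1)) :
    Integrable (fun p : ℝ × ℝ => (Ioc (-1 : ℝ) 1).indicator h p.2 *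
      (Ioc (0 : ℝ) 2).indicator (fun s => k (s - 1)) (p.1 - p.2)) (volume.prod volume) :=
  (integrable_indicator_Ioc hh).convolution_integrand (ContinuousLinearMap.mul ℝ ℝ)
    hk.integrable_truncated

lemma IsScaleKernel.integrableOn_IopDensity (hk : IsScaleKernel φ k)
    (hh : IntegrableOn h (Icc (-1) 1)) : IntegrableOn (IopDensity k h) (Icc (-1) 1) :=
  (hk.integrable_convolution_integrand hh).integral_prod_left.integrableOn.congr_fun
    (fun _ ht => (IopDensity_eq_convolution k h ht.2).symm) measurableSet_Icc

lemma IsScaleKernel.Iop_eq_integral (hk : IsScaleKernel φ k)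
    (hh : IntegrableOn h (Icc (-1) 1)) (hx : x ∈ Icc (-1 : ℝ) 1) :
    Iop (kIter k 1) h x = ∫ t in (-1 : ℝ)..x, IopDensity k h t := by
  have hint := (hk.integrable_convolution_integrand hh).mono_measure
    (Measure.prod_mono (Measure.restrict_le_self (s := Ioc (-1) x)) le_rfl)
  calc Iop (kIter k 1) h x
      = ∫ y in Ioc (-1 : ℝ) 1, kIter k 1 (x - y - 1) * h y :=
        Iop_eq_setIntegral (fun _ => hk.kIter_one_eq_zero) h hx
    _ = ∫ y, ∫ t in Ioc (-1 : ℝ) x, (Ioc (-1 : ℝ) 1).indicator h y *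
          (Ioc (0 : ℝ) 2).indicator (fun s => k (s - 1)) (t - y) := by
        rw [← integral_indicator measurableSet_Ioc]
        refine integral_congr_ae (Eventually.of_forall fun y => ?_)
        dsimp only
        rw [integral_const_mul]
        by_cases hy : y ∈ Ioc (-1 : ℝ) 1
        · rw [indicator_of_mem hy, indicator_of_mem hy, mul_comm]
          congr 1
          rw [← integral_indicator measurableSet_Ioc]
          have hind (t : ℝ) : (Ioc (-1 : ℝ) x).indicator (fun t =>
              (Ioc (0 : ℝ) 2).indicator (fun s => k (s - 1)) (t - y)) t =
              (Ioc y x).indicator (fun t => k (t - (y + 1))) t := by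
            have hiff : t ∈ Ioc (-1 : ℝ) x ∧ t - y ∈ Ioc (0 : ℝ) 2 ↔ t ∈ Ioc y x := by
              simp only [mem_Ioc] at hx hy ⊢
              constructor
              · rintro ⟨⟨_, _⟩, _, _⟩; constructor <;> linarith
              · rintro ⟨_, _⟩; refine ⟨⟨?_, ?_⟩, ?_, ?_⟩ <;> linarith [hx.2]
            simp only [indicator_apply, ← hiff, sub_sub, ite_and]
          simp_rw [hind]
          rw [integral_indicator measurableSet_Ioc]
          rcases le_or_gt y x with hyx | hyx
          · rw [← intervalIntegral.integral_of_le hyx, hk.kIter_one_eq,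
              intervalIntegral.integral_comp_sub_right (fun t => k t)]
            congr 1 <;> ring
          · rw [Ioc_eq_empty (by linarith), hk.kIter_one_eq_zero (by linarith)]
            simp
        · rw [indicator_of_notMem hy, indicator_of_notMem hy, zero_mul]
    _ = ∫ t in Ioc (-1 : ℝ) x, ∫ y, (Ioc (-1 : ℝ) 1).indicator h y *
          (Ioc (0 : ℝ) 2).indicator (fun s => k (s - 1)) (t - y) :=
        (integral_integral_swap hint).symm
    _ = ∫ t in (-1 : ℝ)..x, IopDensity k h t := by
        rw [intervalIntegral.integral_of_le hx.1]
        exact setIntegral_congr_fun measurableSet_Ioc fun t ht =>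
          (IopDensity_eq_convolution k h (ht.2.trans hx.2)).symm

lemma IsScaleKernel.integral_PhiFn_mul_IopDensity (hH0 : H0 φ) (hk : IsScaleKernel φ k)
    (hh : IntegrableOn h (Icc (-1) 1)) {z : ℝ} (hz : z ∈ Ioo (-1 : ℝ) 1) :
    ∫ y in (0 : ℝ)..(z + 1),
      PhiFn φ y * (Icc (-1 : ℝ) 1).indicator (IopDensity k h) (z - y) =
      ∫ t in (-1 : ℝ)..z, h t := by
  have hz1 : 0 ≤ z + 1 := by linarith [hz.1]
  have hres := integral_kernel_integral_kernel hH0.isLaplaceKernel_PhiFn hk.isLaplaceKernel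
    (fun s hs => laplace_PhiFn_mul_laplace_kernel hH0 hk hs) (integrable_indicator_Ioc hh) z
  calc ∫ y in (0 : ℝ)..(z + 1),
        PhiFn φ y * (Icc (-1 : ℝ) 1).indicator (IopDensity k h) (z - y)
      = ∫ y in Ioc (0 : ℝ) (z + 1), PhiFn φ y * IopDensity k h (z - y) := by
        rw [intervalIntegral.integral_of_le hz1]
        refine setIntegral_congr_fun measurableSet_Ioc fun y hy => ?_
        rw [indicator_of_mem]
        constructor <;> linarith [hy.1, hy.2, hz.2]
    _ = ∫ y in Ioi (0 : ℝ), PhiFn φ y * IopDensity k h (z - y) := by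
        symm
        refine setIntegral_eq_of_subset_of_forall_sdiff_eq_zero measurableSet_Ioi
          Ioc_subset_Ioi_self fun y hy => ?_
        have : z + 1 < y := by
          by_contra! hle
          exact hy.2 ⟨hy.1, hle⟩
        rw [IopDensity_eq_zero k h (by linarith), mul_zero]
    _ = ∫ t in Ioi (0 : ℝ), (Ioc (-1 : ℝ) 1).indicator h (z - t) := hres
    _ = ∫ t in Iio z, (Ioc (-1 : ℝ) 1).indicator h t := by
        rw [← integral_indicator measurableSet_Ioi, ← integral_indicator measurableSet_Iio,
          ← integral_sub_left_eq_self _ volume z]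
        simp only [indicator_apply, mem_Ioi, mem_Iio, sub_pos, sub_sub_cancel]
    _ = ∫ t in (-1 : ℝ)..z, h t := by
        rw [setIntegral_indicator measurableSet_Ioc, intervalIntegral.integral_of_le hz.1.le,
          integral_Ioc_eq_integral_Ioo]
        congr 2
        ext t
        simp only [mem_inter_iff, mem_Iio, mem_Ioc, mem_Ioo]
        constructor
        · rintro ⟨h1, h2, _⟩; exact ⟨h2, h1⟩
        · rintro ⟨h1, h2⟩; exact ⟨h2, h1, by linarith [hz.2]⟩

lemma IsScaleKernel.ae_deriv_eq (hH0 : H0 φ) (hk : IsScaleKernel φ k)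
    (hh : IntegrableOn h (Icc (-1) 1)) :
    ∀ᵐ x ∂(volume.restrict (Ioo (-1 : ℝ) 1)),
      deriv (fun z : ℝ => ∫ y in (0 : ℝ)..(z + 1),
        PhiFn φ y * (Icc (-1 : ℝ) 1).indicator (IopDensity k h) (z - y)) x = h x := by
  have hint : IntervalIntegrable h volume (-1) 1 := by
    rw [intervalIntegrable_iff_integrableOn_Icc_of_le (by norm_num)]
    exact hh
  rw [ae_restrict_iff' measurableSet_Ioo]
  filter_upwards [hint.ae_hasDerivAt_integral] with x hx hx1
  rw [uIcc_of_le (by norm_num)] at hx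
  refine ((hx (Ioo_subset_Icc_self hx1) (-1) (by simp)).congr_of_eventuallyEq ?_).deriv
  filter_upwards [isOpen_Ioo.mem_nhds hx1] with z hz
  exact hk.integral_PhiFn_mul_IopDensity hH0 hh hz

end ScaleKernel

/-- bounds and convergence for the Mittag-Leffler type operators, and
the identity `∂^ψ_+ (E^{ψ,β}_+ I^ψ_+ g) = g + β E^{ψ,β}_+ I^ψ_+ g` a.e. on `[-1,1]`. -/
theorem mittagLeffler_operator (φ : Measure ℝ) (hH0 : H0 φ) (k : ℝ → ℝ)
    (hk : IsScaleKernel φ k) (β : ℝ) (hβ : 0 < β) :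
    (∀ g : ℝ → ℝ, IntegrableOn g (Icc (-1) 1) → ∀ n : ℕ, 1 ≤ n →
      ContinuousOn (IopIter (kIter k 1) g n) (Icc (-1) 1) ∧
      ∀ x ∈ Icc (-1 : ℝ) 1, |IopIter (kIter k 1) g n x| ≤
        2 * kIter k 1 1 * (∫ y in Icc (-1 : ℝ) 1, |g y|) *
          (kIter k 1 1 * (1 + x)) ^ (n - 1) / (Nat.factorial (n - 1) : ℝ)) ∧
    (∀ g : ℝ → ℝ, ContinuousOn g (Icc (-1) 1) → ∀ n : ℕ, 1 ≤ n →
      ContinuousOn (IopIter (kIter k 1) g n) (Icc (-1) 1) ∧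
      ∀ x ∈ Icc (-1 : ℝ) 1, |IopIter (kIter k 1) g n x| ≤
        2 * kIter k 1 1 * sSup ((fun y : ℝ => |g y|) '' Icc (-1 : ℝ) 1) *
          (kIter k 1 1 * (1 + x)) ^ (n - 1) / (Nat.factorial (n - 1) : ℝ)) ∧
    (∀ g : ℝ → ℝ, IntegrableOn g (Icc (-1) 1) →
      (∀ x ∈ Icc (-1 : ℝ) 1, Summable (fun n : ℕ => β ^ n * IopIter (kIter k 1) g n x)) ∧
      IntegrableOn (MLop (kIter k 1) β g) (Icc (-1) 1) ∧
      (∫ x in Icc (-1 : ℝ) 1, |MLop (kIter k 1) β g x|) ≤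
        (∫ x in Icc (-1 : ℝ) 1, |g x|) *
          (1 + 2 * kIter k 1 1 * β * Real.exp (2 * kIter k 1 1 * β))) ∧
    (∀ g : ℝ → ℝ, ContinuousOn g (Icc (-1) 1) →
      ContinuousOn (MLop (kIter k 1) β g) (Icc (-1) 1) ∧
      ∀ x ∈ Icc (-1 : ℝ) 1, |MLop (kIter k 1) β g x| ≤
        sSup ((fun y : ℝ => |g y|) '' Icc (-1 : ℝ) 1) *
          (1 + 2 * kIter k 1 1 * β * Real.exp (2 * kIter k 1 1 * β))) ∧
    (∀ g : ℝ → ℝ, IntegrableOn g (Icc (-1) 1) →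
      ∃ v : ℝ → ℝ, IntegrableOn v (Icc (-1) 1) ∧
        (∀ x ∈ Icc (-1 : ℝ) 1,
          MLop (kIter k 1) β (Iop (kIter k 1) g) x = ∫ t in (-1 : ℝ)..x, v t) ∧
        ∀ᵐ x ∂(volume.restrict (Ioo (-1 : ℝ) 1)),
          deriv (fun z : ℝ => ∫ y in (0 : ℝ)..(z + 1),
              PhiFn φ y * (Icc (-1 : ℝ) 1).indicator v (z - y)) x =
            g x + β * MLop (kIter k 1) β (Iop (kIter k 1) g) x) := by
  have hc := hk.continuous_kIter_one
  have h0 : ∀ x ≤ -1, kIter k 1 x = 0 := fun _ => hk.kIter_one_eq_zero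
  have hb : ∀ x ≤ 1, |kIter k 1 x| ≤ kIter k 1 1 := fun _ => hk.abs_kIter_one_le
  have hK : 0 ≤ kIter k 1 1 := (abs_nonneg _).trans (hb 1 le_rfl)
  have hsup {g : ℝ → ℝ} (hg : ContinuousOn g (Icc (-1) 1)) (y : ℝ) (hy : y ∈ Icc (-1 : ℝ) 1) :
      |g y| ≤ sSup ((fun y : ℝ => |g y|) '' Icc (-1 : ℝ) 1) :=
    le_csSup (isCompact_Icc.bddAbove_image hg.abs) (mem_image_of_mem _ hy)
  refine ⟨fun g hg n hn => ⟨continuousOn_IopIter hc h0 hb hg hn, fun x hx => ?_⟩,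
    fun g hg n hn => ⟨continuousOn_IopIter hc h0 hb hg.integrableOn_Icc hn, fun x hx => ?_⟩,
    fun g hg => ⟨fun x hx => summable_MLop hc h0 hb hβ hg hx, integrableOn_MLop hc h0 hb hβ hg,
      integral_abs_MLop_le hc h0 hb hβ hg⟩,
    fun g hg => ⟨?_, fun x hx => ?_⟩, fun g hg => ?_⟩
  · obtain ⟨n, rfl⟩ := Nat.exists_eq_add_of_le' hn
    refine abs_IopIter_succ_le hc h0 hb hg (fun y hy => ?_) n x hx
    refine (abs_Iop_le_L1 hb hg hy).trans ?_
    gcongr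
    linarith
  · obtain ⟨n, rfl⟩ := Nat.exists_eq_add_of_le' hn
    exact abs_IopIter_succ_le hc h0 hb hg.integrableOn_Icc
      (fun y hy => abs_Iop_le_sup hb hg (hsup hg) hy) n x hx
  · exact (hg.add (continuousOn_const.mul
      (continuousOn_MLop_Iop hc h0 hb hβ hg.integrableOn_Icc))).congr
      fun x hx => MLop_eq_add hc h0 hb hβ hg.integrableOn_Icc hx
  · have h1 := abs_MLop_Iop_le hc h0 hb hβ hg.integrableOn_Icc
      (fun y hy => abs_Iop_le_sup hb hg (hsup hg) hy) hx
    have h2 := hsup hg x hx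
    rw [MLop_eq_add hc h0 hb hβ hg.integrableOn_Icc hx]
    refine (abs_add_le _ _).trans ?_
    rw [abs_mul, abs_of_pos hβ]
    linarith [mul_le_mul_of_nonneg_left h1 hβ.le]
  · have hE := integrableOn_MLop hc h0 hb hβ hg
    refine ⟨IopDensity k (MLop (kIter k 1) β g), hk.integrableOn_IopDensity hE,
      fun x hx => ?_, ?_⟩
    · rw [MLop_Iop_eq_Iop_MLop hc h0 hb hβ hg hx, hk.Iop_eq_integral hE hx]
    · filter_upwards [hk.ae_deriv_eq hH0 hE, ae_restrict_mem measurableSet_Ioo] with x hx hx1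
      rw [hx, MLop_eq_add hc h0 hb hβ hg (Ioo_subset_Icc_self hx1)]
end
end

section
/- Density of the Dirichlet–Dirichlet domain: under (H0), the set { I^ψ_+ g − (I^ψ_+ g(1)/k₀⁺(1)) · k₀⁺ : g ∈ L¹[−1,1] } is dense in L¹[−1,1]. (This set is the domain of the left Lévy derivative ∂^ψ_+ with killing boundary conditions at both endpoints of [−1,1].) -/
open MeasureTheory Set Filter Topology

noncomputable section

/-- Two measures on the line with the same finite Laplace transform on `(0, ∞)` agree. -/
theorem MeasureTheory.Measure.ext_of_laplace {P Q : Measure ℝ}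
    (hfin : ∀ ξ : ℝ, 0 < ξ → ∫⁻ x, ENNReal.ofReal (Real.exp (-ξ * x)) ∂P ≠ ⊤)
    (h : ∀ ξ : ℝ, 0 < ξ → ∫⁻ x, ENNReal.ofReal (Real.exp (-ξ * x)) ∂P =
      ∫⁻ x, ENNReal.ofReal (Real.exp (-ξ * x)) ∂Q) : P = Q := by
  set w : ℝ → ENNReal := fun x => ENNReal.ofReal (Real.exp (-x)) with hw
  have hwm : Measurable w := by fun_prop
  have hlin : ∀ (S : Measure ℝ) (t : ℝ),
      ∫⁻ x, ENNReal.ofReal (Real.exp (t * x)) ∂(S.withDensity w) =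
        ∫⁻ x, ENNReal.ofReal (Real.exp (-(1 - t) * x)) ∂S := by
    intro S t
    rw [lintegral_withDensity_eq_lintegral_mul _ hwm (by fun_prop)]
    refine lintegral_congr fun x => ?_
    simp only [hw, Pi.mul_apply]
    rw [← ENNReal.ofReal_mul (Real.exp_pos _).le, ← Real.exp_add]
    congr 2
    ring
  have hfinite : ∀ S : Measure ℝ,
      ∫⁻ x, ENNReal.ofReal (Real.exp (-1 * x)) ∂S ≠ ⊤ → IsFiniteMeasure (S.withDensity w) := by
    intro S hS
    refine isFiniteMeasure_withDensity ?_
    simpa [hw] using hS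
  have hint : ∀ S : Measure ℝ,
      (∀ ξ : ℝ, 0 < ξ → ∫⁻ x, ENNReal.ofReal (Real.exp (-ξ * x)) ∂S ≠ ⊤) →
      Iio 1 ⊆ ProbabilityTheory.integrableExpSet id (S.withDensity w) := by
    intro S hS t ht
    have ht : t < 1 := ht
    refine ⟨by fun_prop, ?_⟩
    rw [hasFiniteIntegral_iff_ofReal (Eventually.of_forall fun x => (Real.exp_pos _).le)]
    simp only [id]
    rw [hlin]
    exact (hS _ (by linarith)).lt_top
  have hQfin : ∀ ξ : ℝ, 0 < ξ → ∫⁻ x, ENNReal.ofReal (Real.exp (-ξ * x)) ∂Q ≠ ⊤ :=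
    fun ξ hξ => h ξ hξ ▸ hfin ξ hξ
  have := hfinite P (hfin 1 one_pos)
  have := hfinite Q (hQfin 1 one_pos)
  have hana : ∀ S : Measure ℝ,
      (∀ ξ : ℝ, 0 < ξ → ∫⁻ x, ENNReal.ofReal (Real.exp (-ξ * x)) ∂S ≠ ⊤) →
      AnalyticOnNhd ℂ (ProbabilityTheory.complexMGF id (S.withDensity w)) {z | z.re < 1} :=
    fun S hS => ProbabilityTheory.analyticOnNhd_complexMGF.mono fun z hz =>
      interior_maximal (hint S hS) isOpen_Iio hz
  have hmgf : ∀ t : ℝ, t < 1 → ProbabilityTheory.mgf id (P.withDensity w) t =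
      ProbabilityTheory.mgf id (Q.withDensity w) t := by
    intro t ht
    simp only [ProbabilityTheory.mgf, id]
    rw [integral_eq_lintegral_of_nonneg_ae (Eventually.of_forall fun x => (Real.exp_pos _).le)
        (by fun_prop),
      integral_eq_lintegral_of_nonneg_ae (Eventually.of_forall fun x => (Real.exp_pos _).le)
        (by fun_prop), hlin, hlin, h _ (by linarith)]
  have hEq : EqOn (ProbabilityTheory.complexMGF id (P.withDensity w))
      (ProbabilityTheory.complexMGF id (Q.withDensity w)) {z | z.re < 1} := by
    refine (hana P hfin).eqOn_of_preconnected_of_frequently_eq (hana Q hQfin)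
      (convex_halfSpace_re_lt 1).isPreconnected (z₀ := 0) (by simp) ?_
    have h_real : ∃ᶠ x : ℝ in 𝓝[≠] 0, ProbabilityTheory.complexMGF id (P.withDensity w) x =
        ProbabilityTheory.complexMGF id (Q.withDensity w) x := by
      refine Eventually.frequently (eventually_nhdsWithin_of_eventually_nhds ?_)
      filter_upwards [Iio_mem_nhds one_pos] with t ht
      rw [ProbabilityTheory.complexMGF_ofReal, ProbabilityTheory.complexMGF_ofReal, hmgf t ht]
    have ht : Tendsto (fun x : ℝ => (x : ℂ)) (𝓝[≠] 0) (𝓝[≠] 0) := by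
      refine tendsto_nhdsWithin_of_tendsto_nhds_of_eventually_within _ ?_ ?_
      · exact (Complex.continuous_ofReal.tendsto' 0 0 (by simp)).mono_left nhdsWithin_le_nhds
      · filter_upwards [self_mem_nhdsWithin] with x hx
        simpa using hx
    exact ht.frequently h_real
  have hPQ : P.withDensity w = Q.withDensity w := by
    refine Measure.ext_of_charFun (funext fun t => ?_)
    rw [← ProbabilityTheory.complexMGF_id_mul_I, ← ProbabilityTheory.complexMGF_id_mul_I]
    exact hEq (by simp)
  have hback : ∀ S : Measure ℝ, (S.withDensity w).withDensity (fun x => (w x)⁻¹) = S :=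
    fun S => withDensity_inv_same hwm
      (Eventually.of_forall fun x => by simp [hw, Real.exp_pos])
      (Eventually.of_forall fun x => by simp [hw])
  rw [← hback P, hPQ, hback Q]

/-- A measure whose Laplace transform at `1` is finite gives finite mass to left half-lines. -/
theorem measure_Iic_ne_top_of_laplace {P : Measure ℝ}
    (hP : ∫⁻ x, ENNReal.ofReal (Real.exp (-1 * x)) ∂P ≠ ⊤) (c : ℝ) : P (Iic c) ≠ ⊤ := by
  have hm := mul_meas_ge_le_lintegral (μ := P)
    (f := fun x => ENNReal.ofReal (Real.exp (-1 * x))) (by fun_prop)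
    (ENNReal.ofReal (Real.exp (-c)))
  have hsub : P (Iic c) ≤
      P {x | ENNReal.ofReal (Real.exp (-c)) ≤ ENNReal.ofReal (Real.exp (-1 * x))} := by
    refine measure_mono fun x hx => ENNReal.ofReal_le_ofReal (Real.exp_le_exp.2 ?_)
    have : x ≤ c := hx
    linarith
  intro htop
  rw [htop, top_le_iff] at hsub
  rw [hsub, ENNReal.mul_top (by simp [Real.exp_pos]), top_le_iff] at hm
  exact hP hm

/-- The measure on `(0, ∞)` with density `f`. -/
def densityOnPos (f : ℝ → ℝ) : Measure ℝ :=
  (volume.restrict (Ioi 0)).withDensity fun x => ENNReal.ofReal (f x)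

instance (f : ℝ → ℝ) : SFinite (densityOnPos f) := by
  unfold densityOnPos; infer_instance

theorem ae_nonneg_densityOnPos (f : ℝ → ℝ) : ∀ᵐ x ∂densityOnPos f, 0 ≤ x :=
  (withDensity_absolutelyContinuous _ _).ae_le
    ((ae_restrict_mem measurableSet_Ioi).mono fun _ hx => le_of_lt hx)

theorem aemeasurable_of_integrableOn_exp_mul {f : ℝ → ℝ} {ξ : ℝ}
    (hf : IntegrableOn (fun x => Real.exp (-ξ * x) * f x) (Ioi 0)) :
    AEMeasurable f (volume.restrict (Ioi 0)) := by
  have h1 : AEMeasurable (fun x => Real.exp (ξ * x) * (Real.exp (-ξ * x) * f x))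
      (volume.restrict (Ioi 0)) :=
    AEMeasurable.mul (by fun_prop) hf.aemeasurable
  refine h1.congr (Eventually.of_forall fun x => ?_)
  simp only
  rw [← mul_assoc, ← Real.exp_add]
  simp

theorem laplace_densityOnPos {f : ℝ → ℝ} {ξ : ℝ} (hf0 : ∀ x, 0 < x → 0 ≤ f x)
    (hf : IntegrableOn (fun x => Real.exp (-ξ * x) * f x) (Ioi 0)) :
    ∫⁻ x, ENNReal.ofReal (Real.exp (-ξ * x)) ∂densityOnPos f =
      ENNReal.ofReal (∫ x in Ioi 0, Real.exp (-ξ * x) * f x) := by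
  rw [densityOnPos, lintegral_withDensity_eq_lintegral_mul₀
    (aemeasurable_of_integrableOn_exp_mul hf).ennreal_ofReal (by fun_prop),
    ofReal_integral_eq_lintegral_ofReal hf ((ae_restrict_mem measurableSet_Ioi).mono
      fun x hx => mul_nonneg (Real.exp_pos _).le (hf0 x hx))]
  refine lintegral_congr fun x => ?_
  rw [Pi.mul_apply, ENNReal.ofReal_mul (Real.exp_pos _).le, mul_comm]

theorem lintegral_exp_neg_mul_Ioi_zero {ξ : ℝ} (hξ : 0 < ξ) :
    ∫⁻ x in Ioi (0 : ℝ), ENNReal.ofReal (Real.exp (-ξ * x)) = ENNReal.ofReal (1 / ξ) := by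
  rw [← ofReal_integral_eq_lintegral_ofReal (integrableOn_exp_mul_Ioi (by linarith) 0)
    (Eventually.of_forall fun x => (Real.exp_pos _).le), integral_exp_mul_Ioi (by linarith)]
  simp

theorem exp_mul_ofReal_eq (f : ℝ → ℝ) (ξ x : ℝ) :
    Complex.exp (-(ξ : ℂ) * (x : ℂ)) * (f x : ℂ) = ((Real.exp (-ξ * x) * f x : ℝ) : ℂ) := by
  push_cast
  rfl

theorem integral_exp_mul_ofReal (f : ℝ → ℝ) (ξ : ℝ) :
    ∫ x in Ioi (0 : ℝ), Complex.exp (-(ξ : ℂ) * (x : ℂ)) * (f x : ℂ) =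
      ((∫ x in Ioi 0, Real.exp (-ξ * x) * f x : ℝ) : ℂ) := by
  simp_rw [exp_mul_ofReal_eq]
  exact integral_ofReal

theorem PhiFn_nonneg (φ : Measure ℝ) (x : ℝ) : 0 ≤ PhiFn φ x := by
  unfold PhiFn
  split_ifs
  · exact integral_nonneg fun y => ENNReal.toReal_nonneg
  · exact le_rfl

theorem IsScaleKernel.nonneg {φ : Measure ℝ} {k : ℝ → ℝ} (hk : IsScaleKernel φ k) (x : ℝ) :
    0 ≤ k x := by
  rcases lt_or_ge x (-1) with hx | hx
  · exact (hk.1 x hx).ge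
  · exact hk.2.1 x hx

theorem IsScaleKernel.indicator_ae_eq {φ : Measure ℝ} {k : ℝ → ℝ} (hk : IsScaleKernel φ k) :
    (Ioi (-1)).indicator k =ᵐ[volume] k := by
  filter_upwards [Measure.ae_ne volume (-1 : ℝ)] with x hx
  rcases lt_or_gt_of_ne hx with h | h
  · rw [indicator_of_notMem (by simpa using h.le), hk.1 x h]
  · rw [indicator_of_mem (by exact h)]

theorem IsScaleKernel.aestronglyMeasurable {φ : Measure ℝ} {k : ℝ → ℝ}
    (hk : IsScaleKernel φ k) : AEStronglyMeasurable k volume :=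
  ((aestronglyMeasurable_indicator_iff measurableSet_Ioi).2
    (hk.2.2.1.aestronglyMeasurable measurableSet_Ioi)).congr hk.indicator_ae_eq

theorem IsScaleKernel.kIter_one_eq_s14 {φ : Measure ℝ} {k : ℝ → ℝ} (hk : IsScaleKernel φ k)
    (u : ℝ) :
    kIter k 1 u = (densityOnPos (fun x => k (x - 1)) (Iic (u + 1))).toReal := by
  change ∫ y in Iic u, k y = _
  rw [integral_eq_lintegral_of_nonneg_ae (Eventually.of_forall hk.nonneg)
    hk.aestronglyMeasurable.restrict]
  congr 1
  rw [densityOnPos, withDensity_apply _ measurableSet_Iic, Measure.restrict_restrict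
    measurableSet_Iic, ← lintegral_indicator measurableSet_Iic,
    ← lintegral_indicator (measurableSet_Iic.inter measurableSet_Ioi),
    ← lintegral_sub_right_eq_self _ (1 : ℝ)]
  refine lintegral_congr_ae ?_
  filter_upwards [Measure.ae_ne volume (0 : ℝ)] with x hx
  rcases lt_or_gt_of_ne hx with h | h
  · rw [indicator_of_notMem (s := Iic (u + 1) ∩ Ioi 0) fun hm => lt_asymm h hm.2]
    rw [indicator_apply, hk.1 (x - 1) (by linarith)]
    simp
  · simp only [indicator_apply, mem_Iic, mem_inter_iff, mem_Ioi, h, and_true, sub_le_iff_le_add]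

theorem IsScaleKernel.integrableOn_exp_mul {φ : Measure ℝ} {k : ℝ → ℝ}
    (hk : IsScaleKernel φ k) {ξ : ℝ} (hξ : 0 < ξ) :
    IntegrableOn (fun x => Real.exp (-ξ * x) * k (x - 1)) (Ioi 0) := by
  have h := (hk.2.2.2.2.2 ξ (by simpa using hξ)).1
  simp_rw [exp_mul_ofReal_eq (fun x => k (x - 1))] at h
  exact h.re

/-- The measures with densities `k₋₁(· - 1)` and `Φ` form a Sonine pair. -/
theorem IsScaleKernel.laplace_mul {φ : Measure ℝ} {k : ℝ → ℝ} (hk : IsScaleKernel φ k)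
    (hk0 : 0 < kIter k 1 1) {ξ : ℝ} (hξ : 0 < ξ) :
    ∫⁻ x, ENNReal.ofReal (Real.exp (-ξ * x)) ∂densityOnPos (PhiFn φ) ≠ ⊤ ∧
    (∫⁻ x, ENNReal.ofReal (Real.exp (-ξ * x)) ∂densityOnPos (fun x => k (x - 1))) *
      ∫⁻ x, ENNReal.ofReal (Real.exp (-ξ * x)) ∂densityOnPos (PhiFn φ) =
      ENNReal.ofReal (1 / ξ) := by
  have hkint := hk.integrableOn_exp_mul hξ
  have hLk := laplace_densityOnPos (fun x _ => hk.nonneg (x - 1)) hkint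
  have hid := (hk.2.2.2.2.2 ξ (by simpa using hξ)).2
  rw [psiFn, integral_exp_mul_ofReal (PhiFn φ), integral_exp_mul_ofReal fun x => k (x - 1)] at hid
  set A := ∫ x in Ioi 0, Real.exp (-ξ * x) * k (x - 1)
  set B := ∫ x in Ioi 0, Real.exp (-ξ * x) * PhiFn φ x with hB
  have hid : A = ξ / (ξ ^ 2 * B) := by exact_mod_cast hid
  have hA : A ≠ 0 := by
    intro hA
    rw [hA, ENNReal.ofReal_zero, lintegral_eq_zero_iff (by fun_prop)] at hLk
    have hzero : densityOnPos (fun x => k (x - 1)) = 0 := by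
      rw [← ae_eq_bot, ← eventually_false_iff_eq_bot]
      filter_upwards [hLk] with x hx
      have : Real.exp (-ξ * x) ≤ 0 := by simpa using! hx
      exact absurd this (not_le.2 (Real.exp_pos _))
    rw [hk.kIter_one_eq_s14, hzero] at hk0
    simp at hk0
  have hB0 : B ≠ 0 := by
    intro h
    rw [h] at hid
    simp at hid
    exact hA hid
  have hΦint : IntegrableOn (fun x => Real.exp (-ξ * x) * PhiFn φ x) (Ioi 0) := by
    by_contra h
    exact hB0 (integral_undef h)
  have hLΦ := laplace_densityOnPos (fun x _ => PhiFn_nonneg φ x) hΦint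
  refine ⟨hLΦ ▸ ENNReal.ofReal_ne_top, ?_⟩
  have hAnn : 0 ≤ A := integral_nonneg fun x => mul_nonneg (Real.exp_pos _).le (hk.nonneg _)
  rw [hLk, hLΦ, ← ENNReal.ofReal_mul hAnn, ← hB, hid]
  congr 1
  field_simp

theorem IsScaleKernel.conv_eq {φ : Measure ℝ} {k : ℝ → ℝ} (hk : IsScaleKernel φ k)
    (hk0 : 0 < kIter k 1 1) :
    (densityOnPos fun x => k (x - 1)).conv (densityOnPos (PhiFn φ)) =
      volume.restrict (Ioi 0) := by
  have hL : ∀ ξ : ℝ, 0 < ξ → ∫⁻ z, ENNReal.ofReal (Real.exp (-ξ * z))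
      ∂((densityOnPos fun x => k (x - 1)).conv (densityOnPos (PhiFn φ))) =
      ENNReal.ofReal (1 / ξ) := by
    intro ξ hξ
    rw [Measure.conv, lintegral_map (by fun_prop) (by fun_prop), ← (hk.laplace_mul hk0 hξ).2,
      ← lintegral_prod_mul (by fun_prop) (by fun_prop)]
    refine lintegral_congr fun z => ?_
    rw [← ENNReal.ofReal_mul (Real.exp_pos _).le, ← Real.exp_add]
    ring_nf
  refine Measure.ext_of_laplace (fun ξ hξ => ?_) fun ξ hξ => ?_
  · rw [hL ξ hξ]
    exact ENNReal.ofReal_ne_top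
  · rw [hL ξ hξ, lintegral_exp_neg_mul_Ioi_zero hξ]

/-- Smooth functions compactly supported in `(-1, 1)` are dense in `L¹[-1, 1]`. -/
theorem exists_contDiff_tsupport_subset_integral_abs_sub_lt {f : ℝ → ℝ}
    (hf : IntegrableOn f (Icc (-1) 1)) {ε : ℝ} (hε : 0 < ε) :
    ∃ h : ℝ → ℝ, ContDiff ℝ 2 h ∧ tsupport h ⊆ Ioo (-1) 1 ∧
      ∫ x in Icc (-1 : ℝ) 1, |f x - h x| < ε := by
  obtain ⟨p, hpc, hps, hpa⟩ := (memLp_one_iff_integrable.2 hf).exist_eLpNorm_sub_le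
    ENNReal.one_ne_top le_rfl (half_pos hε)
  have hpint : IntegrableOn p (Icc (-1) 1) :=
    (hps.continuous.integrable_of_hasCompactSupport hpc).integrableOn
  have hp1 : ∫ x in Icc (-1 : ℝ) 1, |f x - p x| ≤ ε / 2 := by
    rw [← ENNReal.ofReal_le_ofReal_iff (half_pos hε).le]
    refine le_trans (le_of_eq ?_) hpa
    rw [eLpNorm_one_eq_lintegral_enorm, ← ofReal_integral_norm_eq_lintegral_enorm (hf.sub hpint)]
    rfl
  obtain ⟨B, hB⟩ := hpc.exists_bound_of_continuous hps.continuous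
  have hB0 : 0 ≤ B := (norm_nonneg _).trans (hB 0)
  set δ : ℝ := min (1 / 2) (ε / (8 * (B + 1))) with hδ
  have hδ0 : 0 < δ := by positivity
  have hδ1 : δ ≤ 1 / 2 := min_le_left _ _
  have hδ2 : B * (2 * δ) < ε / 2 := by
    have h1 : δ ≤ ε / (8 * (B + 1)) := min_le_right _ _
    rw [le_div_iff₀ (by positivity)] at h1
    nlinarith
  let χ : ContDiffBump (0 : ℝ) :=
    { rIn := 1 - δ, rOut := 1 - δ / 2, rIn_pos := by linarith, rIn_lt_rOut := by linarith }
  have hsupp : tsupport (fun x => χ x * p x) ⊆ Ioo (-1) 1 := by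
    refine (tsupport_mul_subset_left (f := χ) (g := p)).trans ?_
    rw [χ.tsupport_eq, Real.closedBall_eq_Icc]
    intro x hx
    have h1 : 0 - (1 - δ / 2) ≤ x := hx.1
    have h2 : x ≤ 0 + (1 - δ / 2) := hx.2
    constructor <;> linarith
  refine ⟨fun x => χ x * p x, χ.contDiff.mul (hps.of_le (by exact_mod_cast le_top)), hsupp, ?_⟩
  have hmint : IntegrableOn (fun x => χ x * p x) (Icc (-1) 1) :=
    (χ.continuous.mul hps.continuous).continuousOn.integrableOn_Icc
  have hcut : ∫ x in Icc (-1 : ℝ) 1, |p x - χ x * p x| ≤ B * (2 * δ) := by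
    have hle : ∀ x ∈ Icc (-1 : ℝ) 1,
        |p x - χ x * p x| ≤ (Icc (-(1 - δ)) (1 - δ))ᶜ.indicator (fun _ => B) x := by
      intro x _
      by_cases hx : x ∈ Icc (-(1 - δ)) (1 - δ)
      · rw [indicator_of_notMem (not_not_intro hx), χ.one_of_mem_closedBall]
        · simp
        · rw [Real.closedBall_eq_Icc]
          simpa [χ] using hx
      · rw [indicator_of_mem hx]
        have h1 : p x - χ x * p x = (1 - χ x) * p x := by ring
        rw [h1, abs_mul, abs_of_nonneg (by linarith [χ.le_one (x := x)])]
        have h2 : |p x| ≤ B := hB x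
        nlinarith [χ.nonneg (x := x), abs_nonneg (p x)]
    have hm : MeasurableSet (Icc (-(1 - δ)) (1 - δ))ᶜ := measurableSet_Icc.compl
    refine (setIntegral_mono_on (hpint.sub hmint).abs
      ((integrableOn_const (by simp)).indicator hm) measurableSet_Icc hle).trans ?_
    rw [integral_indicator hm, Measure.restrict_restrict hm, inter_comm, ← sdiff_eq,
      setIntegral_const, measureReal_sdiff (Icc_subset_Icc (by linarith) (by linarith))
        measurableSet_Icc (by simp), Real.volume_real_Icc_of_le (by norm_num),
      Real.volume_real_Icc_of_le (by linarith), smul_eq_mul]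
    linarith
  calc ∫ x in Icc (-1 : ℝ) 1, |f x - χ x * p x|
      ≤ ∫ x in Icc (-1 : ℝ) 1, (|f x - p x| + |p x - χ x * p x|) :=
        integral_mono (hf.sub hmint).abs ((hf.sub hpint).abs.add (hpint.sub hmint).abs)
          fun x => abs_sub_le _ _ _
    _ = (∫ x in Icc (-1 : ℝ) 1, |f x - p x|) + ∫ x in Icc (-1 : ℝ) 1, |p x - χ x * p x| :=
        integral_add (hf.sub hpint).abs (hpint.sub hmint).abs
    _ < ε := by linarith

theorem integrable_of_bound_of_support_subset {α : Type*} [MeasurableSpace α] {μ : Measure α}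
    {F : α → ℝ} {C : ℝ} {s : Set α} (hF : AEStronglyMeasurable F μ) (hs : MeasurableSet s)
    (hμs : μ s ≠ ⊤) (hC : ∀ a, |F a| ≤ C) (hzero : ∀ᵐ a ∂μ, a ∉ s → F a = 0) :
    Integrable F μ := by
  refine ((integrable_indicator_iff hs).2 (integrableOn_const (C := C) hμs)).mono' hF ?_
  filter_upwards [hzero] with a ha
  by_cases h : a ∈ s
  · simpa [h] using hC a
  · simp [h, ha h]

section SoninePair

variable {M N : Measure ℝ} [SFinite N] {h : ℝ → ℝ}

theorem deriv_eq_zero_of_le {a b x : ℝ} (hs : tsupport h ⊆ Ioo a b) (hx : x ≤ a) :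
    deriv h x = 0 :=
  deriv_of_notMem_tsupport fun hm => (hs hm).1.not_ge hx

theorem integrableOn_integral_comp_sub (hN : ∀ c, N (Iic c) ≠ ⊤) {a b C : ℝ}
    (hh : Continuous h) (hC : ∀ x, |h x| ≤ C) (hz : ∀ x ≤ a, h x = 0) :
    IntegrableOn (fun y => ∫ q, h (y - q) ∂N) (Icc a b) := by
  have hint : Integrable (fun z : ℝ × ℝ => h (z.1 - z.2)) ((volume.restrict (Icc a b)).prod N) := by
    refine integrable_of_bound_of_support_subset (s := univ ×ˢ Iic (b - a))
      (by fun_prop) (MeasurableSet.univ.prod measurableSet_Iic) ?_ (fun z => hC _) ?_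
    · rw [Measure.prod_prod]
      exact ENNReal.mul_ne_top (by simp) (hN _)
    · filter_upwards [Measure.quasiMeasurePreserving_fst.ae (ae_restrict_mem measurableSet_Icc)]
        with z hz1 hz2
      have h1 : b - a < z.2 := by simpa using hz2
      exact hz _ (by linarith [hz1.2])
  exact hint.integral_prod_left

/-- If `M ∗ N` is Lebesgue measure on `(0, ∞)` and `κ` is the (shifted) distribution function
of `M`, then the convolution operator `Iop κ` inverts the convolution of `N` with the second
derivative, on compactly supported functions. -/
theorem Iop_integral_deriv_deriv [SFinite M] (hM0 : ∀ᵐ r ∂M, 0 ≤ r) (hN0 : ∀ᵐ q ∂N, 0 ≤ q)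
    (hM : ∀ c, M (Iic c) ≠ ⊤) (hN : ∀ c, N (Iic c) ≠ ⊤)
    (hMN : M.conv N = volume.restrict (Ioi 0)) {κ : ℝ → ℝ}
    (hκ : ∀ u, κ u = (M (Iic (u + 1))).toReal)
    (hh : ContDiff ℝ 2 h) {b : ℝ} (hs : tsupport h ⊆ Ioo (-1) b) {x : ℝ} (hx : -1 ≤ x) :
    Iop κ (fun y => ∫ q, deriv (deriv h) (y - q) ∂N) x = h x := by
  have hc : HasCompactSupport h :=
    isCompact_Icc.of_isClosed_subset (isClosed_tsupport h) (hs.trans Ioo_subset_Icc_self)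
  have hd1 : ContDiff ℝ 1 (deriv h) := by
    have : ContDiff ℝ (1 + 1) h := by simpa [one_add_one_eq_two] using hh
    exact (contDiff_succ_iff_deriv.1 this).2.2
  have hd2 : Continuous (deriv (deriv h)) := hd1.continuous_deriv_one
  have hs1 : tsupport (deriv h) ⊆ Ioo (-1) b := tsupport_deriv_subset.trans hs
  obtain ⟨C, hC⟩ := hc.deriv.deriv.exists_bound_of_continuous hd2
  have hC0 : 0 ≤ C := (norm_nonneg _).trans (hC 0)
  set F : ℝ → ℝ × ℝ → ℝ := fun y p =>
    (Iic (x - y)).indicator 1 p.1 * deriv (deriv h) (y - p.2) with hF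
  have hFind : ∀ y p, F y p =
      (Iic (x - p.1)).indicator (fun y => deriv (deriv h) (y - p.2)) y := by
    intro y p
    simp only [hF, indicator_apply, mem_Iic, Pi.one_apply, le_sub_comm (a := y), ite_mul, one_mul,
      zero_mul]
  have hFmeas : Measurable (Function.uncurry F) := by
    have h1 : MeasurableSet {z : ℝ × ℝ × ℝ | z.1 ≤ x - z.2.1} :=
      measurableSet_le (by fun_prop) (by fun_prop)
    have h2 : Function.uncurry F = {z : ℝ × ℝ × ℝ | z.1 ≤ x - z.2.1}.indicator
        (fun z => deriv (deriv h) (z.1 - z.2.2)) := by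
      ext z
      rw [Function.uncurry_def]
      simp only [hFind]
      rfl
    rw [h2]
    exact Measurable.indicator (by fun_prop) h1
  have hFint : Integrable (Function.uncurry F)
      ((volume.restrict (Ioc (-1) x)).prod (M.prod N)) := by
    refine integrable_of_bound_of_support_subset (C := C)
      (s := univ ×ˢ (Iic (x + 1) ×ˢ Iic (x + 1))) hFmeas.aestronglyMeasurable
      (MeasurableSet.univ.prod (measurableSet_Iic.prod measurableSet_Iic)) ?_ ?_ ?_
    · rw [Measure.prod_prod, Measure.prod_prod]
      exact ENNReal.mul_ne_top (by simp) (ENNReal.mul_ne_top (hM _) (hN _))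
    · rintro ⟨y, p⟩
      rw [Function.uncurry_apply_pair, hFind, indicator_apply]
      split_ifs
      · exact hC _
      · simpa using hC0
    · filter_upwards [Measure.quasiMeasurePreserving_fst.ae (ae_restrict_mem measurableSet_Ioc)]
      rintro ⟨y, p⟩ ⟨hy : -1 < y, _⟩ hp
      rw [Function.uncurry_apply_pair, hFind, indicator_apply]
      split_ifs with hpy
      · refine deriv_eq_zero_of_le hs1 ?_
        have hpy : y ≤ x - p.1 := hpy
        have hp2 : ¬p.2 ≤ x + 1 := fun hp2 =>
          hp ⟨mem_univ _, by rw [mem_Iic]; linarith, hp2⟩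
        linarith
      · rfl
  have hinner : ∀ p : ℝ × ℝ, 0 ≤ p.1 → 0 ≤ p.2 →
      ∫ y in Ioc (-1) x, F y p = deriv h (x - (p.1 + p.2)) := by
    intro p hp1 hp2
    simp only [hFind]
    rw [setIntegral_indicator measurableSet_Iic, Ioc_inter_Iic, min_eq_right (by linarith)]
    rcases le_total (-1) (x - p.1) with hle | hle
    · rw [← intervalIntegral.integral_of_le hle, intervalIntegral.integral_comp_sub_right,
        intervalIntegral.integral_deriv_eq_sub (fun y _ => hd1.differentiable one_ne_zero y)
          (hd2.intervalIntegrable _ _), deriv_eq_zero_of_le (x := -1 - p.2) hs (by linarith),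
          sub_zero]
      congr 1
      ring
    · rw [Ioc_eq_empty (not_lt.2 hle), Measure.restrict_empty, integral_zero_measure,
        deriv_eq_zero_of_le hs (by linarith)]
  have hp0 : ∀ᵐ p ∂M.prod N, 0 ≤ p.1 ∧ 0 ≤ p.2 :=
    (Measure.quasiMeasurePreserving_fst.ae hM0).and (Measure.quasiMeasurePreserving_snd.ae hN0)
  have hlast : ∫ z in Ioi (0 : ℝ), deriv h (x - z) = h x := by
    have hrefl : HasCompactSupport fun z => deriv h (x - z) :=
      hc.deriv.comp_homeomorph (Homeomorph.subLeft x)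
    have htends : Tendsto (fun z => -h (x - z)) atTop (𝓝 0) := by
      have h1 : HasCompactSupport fun z => h (x - z) := hc.comp_homeomorph (Homeomorph.subLeft x)
      simpa using (h1.is_zero_at_infty.mono_left atTop_le_cocompact).neg
    have hderiv : ∀ z ∈ Ici (0 : ℝ), HasDerivAt (fun z => -h (x - z)) (deriv h (x - z)) z := by
      intro z _
      have h1 := ((hh.differentiable two_ne_zero (x - z)).hasDerivAt.comp_const_sub x z).neg
      simpa using! h1
    rw [integral_Ioi_of_hasDerivAt_of_tendsto' hderiv
      ((hd1.continuous.comp (by fun_prop)).integrable_of_hasCompactSupport hrefl).integrableOn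
      htends]
    simp
  calc Iop κ (fun y => ∫ q, deriv (deriv h) (y - q) ∂N) x
      = ∫ y in Ioc (-1) x, (∫ p, F y p ∂M.prod N) := by
        rw [Iop, intervalIntegral.integral_of_le hx]
        refine integral_congr_ae (Eventually.of_forall fun y => ?_)
        simp only [hF]
        rw [integral_prod_mul ((Iic (x - y)).indicator 1) fun q => deriv (deriv h) (y - q),
          integral_indicator_one measurableSet_Iic, hκ, Measure.real]
        ring_nf
    _ = ∫ p, (∫ y in Ioc (-1) x, F y p) ∂M.prod N := integral_integral_swap hFint
    _ = ∫ p, deriv h (x - (p.1 + p.2)) ∂M.prod N :=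
        integral_congr_ae (hp0.mono fun p hp => hinner p hp.1 hp.2)
    _ = ∫ z, deriv h (x - z) ∂M.conv N := by
        rw [Measure.conv, integral_map (by fun_prop)
          (show Continuous fun z => deriv h (x - z) from
            hd1.continuous.comp (by fun_prop)).aestronglyMeasurable]
    _ = h x := by rw [hMN, hlast]

end SoninePair

/-- the Dirichlet–Dirichlet domain
`{ I^ψ_+ g - (I^ψ_+ g(1)/k₀⁺(1)) k₀⁺ : g ∈ L¹[-1,1] }` is dense in `L¹[-1,1]`. -/
theorem domain_DD_dense (φ : Measure ℝ) (hH0 : H0 φ) (k : ℝ → ℝ)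
    (hk : IsScaleKernel φ k) (hk0 : 0 < kIter k 1 1) :
    ∀ f : ℝ → ℝ, IntegrableOn f (Icc (-1) 1) → ∀ ε : ℝ, 0 < ε →
      ∃ g : ℝ → ℝ, IntegrableOn g (Icc (-1) 1) ∧
        (∫ x in Icc (-1 : ℝ) 1,
          |f x - (Iop (kIter k 1) g x -
            Iop (kIter k 1) g 1 / kIter k 1 1 * kIter k 1 x)|) < ε := by
  intro f hf ε hε
  obtain ⟨h, hh, hs, hfh⟩ := exists_contDiff_tsupport_subset_integral_abs_sub_lt hf hε
  have hM : ∀ c, densityOnPos (fun x => k (x - 1)) (Iic c) ≠ ⊤ :=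
    measure_Iic_ne_top_of_laplace (by
      rw [laplace_densityOnPos (fun x _ => hk.nonneg _) (hk.integrableOn_exp_mul one_pos)]
      exact ENNReal.ofReal_ne_top)
  have hN : ∀ c, densityOnPos (PhiFn φ) (Iic c) ≠ ⊤ :=
    measure_Iic_ne_top_of_laplace (hk.laplace_mul hk0 one_pos).1
  have hI : ∀ x, -1 ≤ x → Iop (kIter k 1)
      (fun y => ∫ q, deriv (deriv h) (y - q) ∂densityOnPos (PhiFn φ)) x = h x :=
    fun x hx => Iop_integral_deriv_deriv (ae_nonneg_densityOnPos _) (ae_nonneg_densityOnPos _)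
      hM hN (hk.conv_eq hk0) hk.kIter_one_eq_s14 hh hs hx
  have hc : HasCompactSupport h :=
    isCompact_Icc.of_isClosed_subset (isClosed_tsupport h) (hs.trans Ioo_subset_Icc_self)
  have hd2 : Continuous (deriv (deriv h)) := by
    simpa [iteratedDeriv_succ] using hh.continuous_iteratedDeriv 2 le_rfl
  obtain ⟨C, hC⟩ := hc.deriv.deriv.exists_bound_of_continuous hd2
  refine ⟨_, integrableOn_integral_comp_sub hN hd2 hC fun x hx =>
    deriv_eq_zero_of_le (tsupport_deriv_subset.trans hs) hx, ?_⟩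
  have h1 : h 1 = 0 := image_eq_zero_of_notMem_tsupport fun hm => lt_irrefl _ (hs hm).2
  rw [hI 1 (by norm_num), h1, zero_div]
  simp only [zero_mul, sub_zero]
  rw [setIntegral_congr_fun measurableSet_Icc fun x hx => by rw [hI x hx.1]]
  exact hfh
end
end

section
/- The Grünwald-type scheme generates a Feller semigroup on the line: under (H0), fix h > 0. The formula (A_h f)(x) = Σ_{j=0}^∞ G^ψ_{j,h} f(x + (j−1)h) defines a bounded linear operator A_h on the Banach space C₀(ℝ) of continuous functions vanishing at infinity (the series converges absolutely in supremum norm, since G^ψ_{j,h} > 0 for j ≠ 1 and Σ_{j≠1} G^ψ_{j,h} = −G^ψ_{1,h} < ∞), with operator norm ‖A_h‖ ≤ 2|G^ψ_{1,h}|. Moreover, for every t ≥ 0, the operator exponential e^{t A_h} is a positive contraction on C₀(ℝ): ‖e^{t A_h} f‖_∞ ≤ ‖f‖_∞ for every f ∈ C₀(ℝ), and e^{t A_h} f ≥ 0 whenever f ≥ 0. -/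
open MeasureTheory Set Filter Topology

noncomputable section

/-- Grünwald-type coefficients `G^ψ_{j,h} = ((-1)^j/(j! h^j)) ψ^{(j)}(1/h)`. -/
def grunPsi (φ : Measure ℝ) (j : ℕ) (h : ℝ) : ℝ :=
  (((-1 : ℂ) ^ j / ((Nat.factorial j : ℂ) * (h : ℂ) ^ j)) *
    iteratedDeriv j (psiFn φ) ((1 : ℂ) / (h : ℂ))).re

/-- Grünwald-type coefficients of order `ψ - 1`:
`G^{ψ-1}_{j,h} = ((-1)^j/(j! h^j)) (d^j/dξ^j)(ψ(ξ)/ξ)|_{ξ=1/h}`. -/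
def grunPsiM1 (φ : Measure ℝ) (j : ℕ) (h : ℝ) : ℝ :=
  (((-1 : ℂ) ^ j / ((Nat.factorial j : ℂ) * (h : ℂ) ^ j)) *
    iteratedDeriv j (fun ξ : ℂ => psiFn φ ξ / ξ) ((1 : ℂ) / (h : ℂ))).re

/-- Grünwald-type coefficients for the scale functions:
`G^{k_i}_{j,h} = ((-1)^j/(j! h^j)) (d^j/dξ^j)(ξ^{-i}/ψ(ξ))|_{ξ=1/h}` for `i ∈ {1,0,-1,-2}`. -/
def grunK (φ : Measure ℝ) (i : ℤ) (j : ℕ) (h : ℝ) : ℝ :=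
  (((-1 : ℂ) ^ j / ((Nat.factorial j : ℂ) * (h : ℂ) ^ j)) *
    iteratedDeriv j (fun ξ : ℂ => ξ ^ (-i) / psiFn φ ξ) ((1 : ℂ) / (h : ℂ))).re

open scoped ZeroAtInfty

/-- The operator exponential `e^{tA} = Σ_n (tⁿ/n!) Aⁿ` of a bounded operator `A` on
`C₀(ℝ)` (the series converges in operator norm). -/
def expOp (A : C₀(ℝ, ℝ) →L[ℝ] C₀(ℝ, ℝ)) (t : ℝ) : C₀(ℝ, ℝ) →L[ℝ] C₀(ℝ, ℝ) :=
  ∑' n : ℕ, (t ^ n / (Nat.factorial n : ℝ)) • (A ^ n)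

section PositiveOperators

variable {E X : Type*} [NormedAddCommGroup E] [NormedSpace ℝ E]

/-- An operator is positive with respect to a family `ev` of continuous linear functionals
(thought of as point evaluations) if it preserves the cone `{f | ∀ x, 0 ≤ ev x f}`. -/
def IsPosOp (ev : X → E →L[ℝ] ℝ) (B : E →L[ℝ] E) : Prop :=
  ∀ f : E, (∀ x, 0 ≤ ev x f) → ∀ x, 0 ≤ ev x (B f)

/-- The exponential series `Σ_n (tⁿ/n!) Aⁿ` of a bounded operator. -/
def expSeriesOp (A : E →L[ℝ] E) (t : ℝ) : E →L[ℝ] E :=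
  ∑' n : ℕ, (t ^ n / (Nat.factorial n : ℝ)) • (A ^ n)

lemma IsPosOp.hasSum {ι : Type*} {ev : X → E →L[ℝ] ℝ} {B : ι → E →L[ℝ] E} {S : E →L[ℝ] E}
    (hB : HasSum B S) (hpos : ∀ i, IsPosOp ev (B i)) : IsPosOp ev S := fun f hf x =>
  ((hB.mapL (ContinuousLinearMap.apply ℝ E f)).mapL (ev x)).nonneg fun i => hpos i f hf x

lemma IsPosOp.smul {ev : X → E →L[ℝ] ℝ} {B : E →L[ℝ] E} (hB : IsPosOp ev B) {c : ℝ}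
    (hc : 0 ≤ c) : IsPosOp ev (c • B) := fun f hf x => by
  simpa using mul_nonneg hc (hB f hf x)

lemma IsPosOp.pow {ev : X → E →L[ℝ] ℝ} {B : E →L[ℝ] E} (hB : IsPosOp ev B) (n : ℕ) :
    IsPosOp ev (B ^ n) := by
  induction n with
  | zero => exact fun f hf x => by simpa using hf x
  | succ n ih =>
    intro f hf x
    rw [pow_succ]
    exact ih (B f) (hB f hf) x

lemma norm_expSeriesOp_le (B : E →L[ℝ] E) {t : ℝ} (ht : 0 ≤ t) :
    ‖expSeriesOp B t‖ ≤ Real.exp (t * ‖B‖) := by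
  have h1 : HasSum (fun n : ℕ => (t * ‖B‖) ^ n / (Nat.factorial n : ℝ)) (Real.exp (t * ‖B‖)) := by
    rw [Real.exp_eq_exp_ℝ]
    exact NormedSpace.expSeries_div_hasSum_exp (t * ‖B‖)
  refine tsum_of_norm_bounded h1 fun n => ?_
  have h2 : ‖B ^ n‖ ≤ ‖B‖ ^ n := by
    cases n with
    | zero =>
      rw [pow_zero, pow_zero]
      exact ContinuousLinearMap.norm_id_le
    | succ n => exact norm_pow_le' B n.succ_pos
  rw [norm_smul, Real.norm_of_nonneg (by positivity), mul_pow, mul_div_right_comm]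
  gcongr

variable [CompleteSpace E]

lemma hasSum_expSeriesOp (A : E →L[ℝ] E) (t : ℝ) :
    HasSum (fun n : ℕ => (t ^ n / (Nat.factorial n : ℝ)) • (A ^ n))
      (NormedSpace.exp (t • A)) := by
  have h1 : (fun n : ℕ => (t ^ n / (Nat.factorial n : ℝ)) • (A ^ n)) =
      fun n : ℕ => ((Nat.factorial n : ℝ)⁻¹) • (t • A) ^ n := by
    ext1 n
    rw [smul_pow, smul_smul, div_eq_inv_mul]
  rw [h1]
  exact NormedSpace.exp_series_hasSum_exp' (𝕂 := ℝ) (t • A)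

lemma expSeriesOp_eq_exp (A : E →L[ℝ] E) (t : ℝ) :
    expSeriesOp A t = NormedSpace.exp (t • A) :=
  (hasSum_expSeriesOp A t).tsum_eq

lemma IsPosOp.expSeriesOp {ev : X → E →L[ℝ] ℝ} {B : E →L[ℝ] E} (hB : IsPosOp ev B) {t : ℝ}
    (ht : 0 ≤ t) : IsPosOp ev (expSeriesOp B t) := by
  rw [expSeriesOp_eq_exp]
  exact IsPosOp.hasSum (hasSum_expSeriesOp B t) fun n => (hB.pow n).smul (by positivity)

lemma expSeriesOp_add_smul_one (B : E →L[ℝ] E) (c t : ℝ) :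
    expSeriesOp (B + c • 1) t = Real.exp (t * c) • expSeriesOp B t := by
  let _ : NormedAlgebra ℚ (E →L[ℝ] E) := NormedAlgebra.restrictScalars ℚ ℝ _
  rw [expSeriesOp_eq_exp, expSeriesOp_eq_exp, smul_add, NormedSpace.exp_add_of_commute, smul_smul,
    ← Algebra.algebraMap_eq_smul_one, ← NormedSpace.algebraMap_exp_comm, ← Real.exp_eq_exp_ℝ,
    ← Algebra.commutes, ← Algebra.smul_def]
  exact (((Commute.one_right B).smul_right c).smul_left t).smul_right t

/-- If `T j` are positive contractions with `T 1 = 1` and the weights `G j` are nonnegative for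
`j ≠ 1` with total mass zero, then `Σ_j G j • T j` is a bounded operator generating a semigroup of
positive contractions. -/
lemma exists_generator_of_hasSum_zero {ev : X → E →L[ℝ] ℝ} {T : ℕ → E →L[ℝ] E}
    (hT : ∀ j, ‖T j‖ ≤ 1) (hT1 : T 1 = 1) (hTpos : ∀ j, IsPosOp ev (T j))
    {G : ℕ → ℝ} (hpos : ∀ j, j ≠ 1 → 0 ≤ G j) (hsum : HasSum G 0) :
    ∃ A : E →L[ℝ] E,
      (∀ f : E, ∀ x : X, ev x (A f) = ∑' j : ℕ, G j * ev x (T j f)) ∧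
      ‖A‖ ≤ 2 * |G 1| ∧
      ∀ t : ℝ, 0 ≤ t →
        (∀ f : E, ‖expSeriesOp A t f‖ ≤ ‖f‖) ∧ IsPosOp ev (expSeriesOp A t) := by
  set P : ℕ → ℝ := Function.update G 1 0 with hP
  have hP0 : ∀ j, 0 ≤ P j := by
    intro j
    rcases eq_or_ne j 1 with rfl | hj
    · simp [hP]
    · simpa [hP, hj] using hpos j hj
  have hPsum : HasSum P (-G 1) := by
    simpa using hsum.update 1 0
  have hG1 : G 1 ≤ 0 := by linarith [hPsum.nonneg hP0]
  have hnorm : ∀ j : ℕ, ‖P j • T j‖ ≤ P j := by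
    intro j
    rw [norm_smul, Real.norm_of_nonneg (hP0 j)]
    exact mul_le_of_le_one_right (hP0 j) (hT j)
  obtain ⟨B, hB⟩ := Summable.of_norm_bounded hPsum.summable hnorm
  have hBpos : IsPosOp ev B := IsPosOp.hasSum hB fun j => (hTpos j).smul (hP0 j)
  have hBnorm : ‖B‖ ≤ -G 1 := hB.tsum_eq ▸ tsum_of_norm_bounded hPsum hnorm
  have hA : HasSum (fun j : ℕ => G j • T j) (B + G 1 • 1) := by
    have h1 : (fun j : ℕ => G j • T j) =
        Function.update (fun j : ℕ => P j • T j) 1 (G 1 • (1 : E →L[ℝ] E)) := by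
      ext1 j
      rcases eq_or_ne j 1 with rfl | hj
      · simp [hT1]
      · simp [hP, hj]
    have h2 : B + G 1 • (1 : E →L[ℝ] E) = G 1 • (1 : E →L[ℝ] E) - P 1 • T 1 + B := by
      simp [hP, add_comm]
    rw [h1, h2]
    exact hB.update 1 (G 1 • 1)
  refine ⟨B + G 1 • 1, fun f x => ?_, ?_, fun t ht => ⟨fun f => ?_, ?_⟩⟩
  · have := (hA.mapL (ContinuousLinearMap.apply ℝ E f)).mapL (ev x)
    simpa using this.tsum_eq.symm
  · have h1 : ‖G 1 • (1 : E →L[ℝ] E)‖ ≤ |G 1| := by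
      rw [norm_smul, Real.norm_eq_abs]
      exact mul_le_of_le_one_right (abs_nonneg _) ContinuousLinearMap.norm_id_le
    have := norm_add_le B (G 1 • 1)
    rw [abs_of_nonpos hG1] at *
    linarith
  · rw [expSeriesOp_add_smul_one]
    have h1 : ‖Real.exp (t * G 1) • expSeriesOp B t‖ ≤ 1 := by
      rw [norm_smul, Real.norm_of_nonneg (Real.exp_nonneg _)]
      calc Real.exp (t * G 1) * ‖expSeriesOp B t‖
          ≤ Real.exp (t * G 1) * Real.exp (t * ‖B‖) := by gcongr; exact norm_expSeriesOp_le B ht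
        _ = Real.exp (t * (G 1 + ‖B‖)) := by rw [← Real.exp_add, mul_add]
        _ ≤ 1 := Real.exp_le_one_iff.2 (mul_nonpos_of_nonneg_of_nonpos ht (by linarith))
    exact (ContinuousLinearMap.le_of_opNorm_le _ h1 f).trans_eq (one_mul _)
  · rw [expSeriesOp_add_smul_one]
    exact (hBpos.expSeriesOp ht).smul (Real.exp_nonneg _)

end PositiveOperators

/-- Point evaluation as a continuous linear functional on `C₀(ℝ)`. -/
def evalC0 (x : ℝ) : C₀(ℝ, ℝ) →L[ℝ] ℝ :=
  LinearMap.mkContinuous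
    { toFun := fun f => f x
      map_add' := fun _ _ => rfl
      map_smul' := fun _ _ => rfl } 1
    (fun f => by
      rw [one_mul, ← ZeroAtInftyContinuousMap.norm_toBCF_eq_norm]
      exact f.toBCF.norm_coe_le_norm x)

/-- Translation by `a`, `f ↦ f (· + a)`, on `C₀(ℝ)`. -/
def translateC0 (a : ℝ) : C₀(ℝ, ℝ) →L[ℝ] C₀(ℝ, ℝ) :=
  LinearMap.mkContinuous
    (ZeroAtInftyContinuousMap.compLinearMap (Homeomorph.addRight a).toCocompactMap) 1
    (fun f => by
      rw [one_mul, ← ZeroAtInftyContinuousMap.norm_toBCF_eq_norm,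
        ← ZeroAtInftyContinuousMap.norm_toBCF_eq_norm]
      exact (BoundedContinuousFunction.norm_le (norm_nonneg _)).2
        fun x => f.toBCF.norm_coe_le_norm (x + a))

lemma translateC0_apply (a : ℝ) (f : C₀(ℝ, ℝ)) (x : ℝ) :
    translateC0 a f x = f (x + a) := rfl

lemma norm_translateC0_le (a : ℝ) : ‖translateC0 a‖ ≤ 1 :=
  LinearMap.mkContinuous_norm_le _ zero_le_one _

lemma translateC0_zero : translateC0 0 = 1 := by
  ext f x
  rw [translateC0_apply, add_zero]
  rfl

/-- A translation-series operator with nonnegative off-diagonal weights of total mass zero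
generates a positive contraction semigroup on `C₀(ℝ)`. -/
lemma exists_translation_series_generator {G : ℕ → ℝ} (hpos : ∀ j, j ≠ 1 → 0 ≤ G j)
    (hsum : HasSum G 0) (h : ℝ) :
    ∃ A : C₀(ℝ, ℝ) →L[ℝ] C₀(ℝ, ℝ),
      (∀ f : C₀(ℝ, ℝ), ∀ x : ℝ, A f x = ∑' j : ℕ, G j * f (x + ((j : ℝ) - 1) * h)) ∧
      ‖A‖ ≤ 2 * |G 1| ∧
      ∀ t : ℝ, 0 ≤ t →
        (∀ f : C₀(ℝ, ℝ), ‖expOp A t f‖ ≤ ‖f‖) ∧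
        (∀ f : C₀(ℝ, ℝ), (∀ x : ℝ, 0 ≤ f x) → ∀ x : ℝ, 0 ≤ expOp A t f x) := by
  have hT1 : translateC0 (((1 : ℕ) - 1 : ℝ) * h) = 1 := by simp [translateC0_zero]
  exact exists_generator_of_hasSum_zero (ev := evalC0)
    (T := fun j : ℕ => translateC0 (((j : ℝ) - 1) * h)) (fun j => norm_translateC0_le _)
    hT1 (fun j f hf x => hf _) hpos hsum

/-- The kernel `e^{-ξz} - 1 + ξz` and its iterated derivatives with respect to `ξ`. -/
def levyKernel (n : ℕ) (ξ : ℂ) (z : ℝ) : ℂ :=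
  (-(z : ℂ)) ^ n * Complex.exp (-ξ * z) +
    (if n = 0 then -1 + ξ * z else if n = 1 then (z : ℂ) else 0)

lemma hasDerivAt_levyKernel (n : ℕ) (ξ : ℂ) (z : ℝ) :
    HasDerivAt (fun ξ => levyKernel n ξ z) (levyKernel (n + 1) ξ z) ξ := by
  have h1 : HasDerivAt (fun ξ : ℂ => -ξ * (z : ℂ)) (-(z : ℂ)) ξ := by
    simpa using ((hasDerivAt_id ξ).neg).mul_const (z : ℂ)
  have h2 := (h1.cexp).const_mul ((-(z : ℂ)) ^ n)
  have h3 : HasDerivAt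
      (fun ξ : ℂ => if n = 0 then -1 + ξ * z else if n = 1 then (z : ℂ) else 0)
      (if n = 0 then (z : ℂ) else 0) ξ := by
    rcases n with _ | _ | n
    · simpa using ((hasDerivAt_id ξ).mul_const (z : ℂ)).const_add (-1)
    · simpa using hasDerivAt_const ξ (z : ℂ)
    · simpa using hasDerivAt_const ξ (0 : ℂ)
  refine (h2.add h3).congr_deriv ?_
  simp only [levyKernel, pow_succ, Nat.add_eq_zero_iff, Nat.add_eq_right, one_ne_zero, and_false,
    if_false]
  ring

lemma measurable_levyKernel (n : ℕ) (ξ : ℂ) : Measurable (levyKernel n ξ) := by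
  unfold levyKernel
  have : Continuous fun z : ℝ =>
      (if n = 0 then -1 + ξ * z else if n = 1 then (z : ℂ) else 0) := by
    split_ifs <;> fun_prop
  exact Continuous.measurable (by fun_prop)

lemma norm_exp_neg_le_one {w : ℂ} (hw : 0 ≤ w.re) : ‖Complex.exp (-w)‖ ≤ 1 := by
  rw [Complex.norm_exp, Real.exp_le_one_iff, Complex.neg_re]
  linarith

lemma norm_exp_neg_sub_one_le {w : ℂ} (hw : 0 ≤ w.re) :
    ‖Complex.exp (-w) - 1‖ ≤ 2 * min 1 ‖w‖ := by
  have h1 : ‖Complex.exp (-w) - 1‖ ≤ 2 := by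
    have := norm_sub_le (Complex.exp (-w)) 1
    rw [norm_one] at this
    linarith [norm_exp_neg_le_one hw]
  rcases le_total ‖w‖ 1 with h | h
  · rw [min_eq_right h]
    simpa using Complex.norm_exp_sub_one_le (x := -w) (by simpa using h)
  · rw [min_eq_left h]
    linarith

lemma norm_exp_neg_sub_one_add_le {w : ℂ} (hw : 0 ≤ w.re) :
    ‖Complex.exp (-w) - 1 + w‖ ≤ 3 * min (‖w‖ ^ 2) ‖w‖ := by
  have h0 := norm_nonneg w
  rcases le_total ‖w‖ 1 with h | h
  · have h1 : ‖Complex.exp (-w) - 1 + w‖ ≤ ‖w‖ ^ 2 := by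
      simpa using Complex.norm_exp_sub_one_sub_id_le (x := -w) (by simpa using h)
    rw [min_eq_left (by nlinarith)]
    nlinarith
  · have h1 := norm_add_le (Complex.exp (-w) - 1) w
    have h2 := norm_exp_neg_sub_one_le hw
    rw [min_eq_left h] at h2
    rw [min_eq_right (by nlinarith)]
    linarith

lemma pow_mul_exp_neg_le (k : ℕ) {ε z : ℝ} (hε : 0 < ε) (hz : 0 ≤ z) :
    z ^ k * Real.exp (-(ε * z)) ≤ k.factorial / ε ^ k := by
  have h1 := Real.pow_div_factorial_le_exp (ε * z) (by positivity) k
  rw [Real.exp_neg, ← div_eq_mul_inv, div_le_div_iff₀ (Real.exp_pos _) (by positivity)]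
  rw [div_le_iff₀ (by positivity), mul_pow] at h1
  linarith

lemma exists_norm_levyKernel_le (n : ℕ) {ε R : ℝ} (hε : 0 < ε) (hR : 1 ≤ R) :
    ∃ C : ℝ, ∀ ξ : ℂ, ε ≤ ξ.re → ‖ξ‖ ≤ R → ∀ z : ℝ, 0 < z →
      ‖levyKernel n ξ z‖ ≤ C * min (z ^ 2) z := by
  have hre : ∀ ξ : ℂ, ∀ z : ℝ, (ξ * z).re = ξ.re * z := fun ξ z => by simp
  have hnorm : ∀ ξ : ℂ, ‖ξ‖ ≤ R → ∀ z : ℝ, 0 < z → ‖ξ * z‖ ≤ R * z := fun ξ hξ z hz => by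
    rw [norm_mul, Complex.norm_real, Real.norm_of_nonneg hz.le]
    gcongr
  rcases n with _ | _ | n
  · refine ⟨3 * R ^ 2, fun ξ h1 h2 z hz => ?_⟩
    have h3 := norm_exp_neg_sub_one_add_le (w := ξ * z) (by rw [hre]; nlinarith)
    have h4 := hnorm ξ h2 z hz
    have h5 : levyKernel 0 ξ z = Complex.exp (-(ξ * z)) - 1 + ξ * z := by
      simp [levyKernel]; ring
    rw [h5, mul_assoc]
    refine h3.trans (mul_le_mul_of_nonneg_left ?_ (by norm_num))
    rw [mul_min_of_nonneg _ _ (by positivity)]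
    refine min_le_min ?_ ?_
    · rw [← mul_pow]
      gcongr
    · refine h4.trans ?_
      gcongr
      nlinarith
  · refine ⟨2 * R, fun ξ h1 h2 z hz => ?_⟩
    have h3 := norm_exp_neg_sub_one_le (w := ξ * z) (by rw [hre]; nlinarith)
    have h4 := hnorm ξ h2 z hz
    have h5 : levyKernel 1 ξ z = -z * (Complex.exp (-(ξ * z)) - 1) := by
      simp [levyKernel]; ring
    rw [h5, norm_mul, norm_neg, Complex.norm_real, Real.norm_of_nonneg hz.le]
    rw [mul_min_of_nonneg _ _ (by positivity)]
    have h6 := h3.trans (mul_le_mul_of_nonneg_left (min_le_left _ _) zero_le_two)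
    have h7 := h3.trans (mul_le_mul_of_nonneg_left (min_le_right _ _) zero_le_two)
    refine le_min ?_ ?_ <;> nlinarith
  · refine ⟨max (n.factorial / ε ^ n) ((n + 1).factorial / ε ^ (n + 1)),
      fun ξ h1 h2 z hz => ?_⟩
    have h3 : ‖levyKernel (n + 2) ξ z‖ ≤ z ^ (n + 2) * Real.exp (-(ε * z)) := by
      have : levyKernel (n + 2) ξ z = (-(z : ℂ)) ^ (n + 2) * Complex.exp (-ξ * z) := by
        simp [levyKernel]
      rw [this, norm_mul, norm_pow, norm_neg, Complex.norm_real, Real.norm_of_nonneg hz.le,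
        Complex.norm_exp]
      gcongr
      simp only [neg_mul, Complex.neg_re, hre]
      nlinarith
    refine h3.trans ?_
    rw [mul_min_of_nonneg _ _ (by positivity)]
    refine le_min ?_ ?_
    · calc z ^ (n + 2) * Real.exp (-(ε * z)) = (z ^ n * Real.exp (-(ε * z))) * z ^ 2 := by ring
        _ ≤ _ := by
          gcongr
          exact (pow_mul_exp_neg_le n hε hz.le).trans (le_max_left _ _)
    · calc z ^ (n + 2) * Real.exp (-(ε * z)) = (z ^ (n + 1) * Real.exp (-(ε * z))) * z := by ring
        _ ≤ _ := by
          gcongr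
          exact (pow_mul_exp_neg_le (n + 1) hε hz.le).trans (le_max_right _ _)

namespace H0

variable {φ : Measure ℝ}

lemma ae_pos_s19 (hφ : H0 φ) : ∀ᵐ z ∂φ, 0 < z := by
  rw [ae_iff]
  simpa [Set.Iic] using hφ.1

lemma integrable_min (hφ : H0 φ) : Integrable (fun z : ℝ => min (z ^ 2) z) φ := by
  have h1 : φ.restrict (Ioi 0) = φ := Measure.restrict_eq_self_of_ae_mem hφ.ae_pos_s19
  refine ⟨Measurable.aestronglyMeasurable (by fun_prop), ?_⟩
  rw [hasFiniteIntegral_iff_ofReal]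
  · simpa only [h1] using hφ.2.1
  · filter_upwards [hφ.ae_pos_s19] with z hz
    positivity

lemma sFinite (hφ : H0 φ) : SFinite φ := by
  have h1 := isFiniteMeasure_withDensity_ofReal hφ.integrable_min.2
  rw [← withDensity_inv_same (μ := φ) (f := fun z => ENNReal.ofReal (min (z ^ 2) z))
    (by fun_prop) _ (Eventually.of_forall fun _ => ENNReal.ofReal_ne_top)]
  · infer_instance
  · filter_upwards [hφ.ae_pos_s19] with z hz
    simpa using ⟨by positivity, hz⟩

lemma integrable_of_le (hφ : H0 φ) {E : Type*} [NormedAddCommGroup E] {f : ℝ → E}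
    (hf : AEStronglyMeasurable f φ) {C : ℝ} (hC : ∀ z, 0 < z → ‖f z‖ ≤ C * min (z ^ 2) z) :
    Integrable f φ :=
  (hφ.integrable_min.const_mul C).mono' hf (hφ.ae_pos_s19.mono fun z hz => hC z hz)

lemma integrable_levyKernel (hφ : H0 φ) (n : ℕ) {ξ : ℂ} (hξ : 0 < ξ.re) :
    Integrable (levyKernel n ξ) φ := by
  obtain ⟨C, hC⟩ := exists_norm_levyKernel_le n hξ (le_max_left 1 ‖ξ‖)
  exact hφ.integrable_of_le (measurable_levyKernel n ξ).aestronglyMeasurable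
    (hC ξ le_rfl (le_max_right _ _))

lemma hasDerivAt_integral_levyKernel (hφ : H0 φ) (n : ℕ) {ξ : ℂ} (hξ : 0 < ξ.re) :
    HasDerivAt (fun ξ => ∫ z, levyKernel n ξ z ∂φ) (∫ z, levyKernel (n + 1) ξ z ∂φ) ξ := by
  have hR : 1 ≤ ‖ξ‖ + 1 := by linarith [norm_nonneg ξ]
  obtain ⟨C, hC⟩ := exists_norm_levyKernel_le (n + 1) (half_pos hξ) hR
  have hs : {ζ : ℂ | ξ.re / 2 < ζ.re ∧ ‖ζ‖ < ‖ξ‖ + 1} ∈ 𝓝 ξ := by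
    refine IsOpen.mem_nhds ?_ ⟨by linarith, by linarith⟩
    exact (isOpen_lt continuous_const Complex.continuous_re).inter
      (isOpen_lt continuous_norm continuous_const)
  refine (hasDerivAt_integral_of_dominated_loc_of_deriv_le hs
    (Eventually.of_forall fun ζ => (measurable_levyKernel n ζ).aestronglyMeasurable)
    (hφ.integrable_levyKernel n hξ) (measurable_levyKernel (n + 1) ξ).aestronglyMeasurable
    ?_ (hφ.integrable_min.const_mul C)
    (Eventually.of_forall fun z ζ _ => hasDerivAt_levyKernel n ζ z)).2
  filter_upwards [hφ.ae_pos_s19] with z hz ζ hζ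
  exact hC ζ hζ.1.le hζ.2.le z hz

lemma integrable_posPart_sub (hφ : H0 φ) {x : ℝ} (hx : 0 < x) :
    Integrable (fun z : ℝ => max (z - x) 0) φ := by
  refine hφ.integrable_of_le (C := max 1 x⁻¹)
    (Measurable.aestronglyMeasurable (by fun_prop)) fun z hz => ?_
  rw [Real.norm_of_nonneg (le_max_right _ _)]
  rcases le_total z x with h | h
  · rw [max_eq_right (by linarith)]
    positivity
  · rw [max_eq_left (by linarith), mul_min_of_nonneg _ _ (by positivity)]
    refine le_min ?_ ?_
    · calc z - x ≤ z := by linarith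
        _ = x⁻¹ * (x * z) := by field_simp
        _ ≤ max 1 x⁻¹ * z ^ 2 := by
          rw [pow_two]
          gcongr
          exact le_max_right _ _
    · calc z - x ≤ 1 * z := by linarith
        _ ≤ _ := by
          gcongr
          exact le_max_left _ _

lemma phiFn_eq (hφ : H0 φ) {x : ℝ} (hx : 0 < x) : PhiFn φ x = ∫ z, max (z - x) 0 ∂φ := by
  rw [(hφ.integrable_posPart_sub hx).integral_eq_integral_meas_lt
    (Eventually.of_forall fun _ => le_max_right _ _), PhiFn, if_pos hx]
  have h1 : ∫ t in Ioi (0 : ℝ), levyTail φ (t + x) = ∫ y in Ioi x, levyTail φ y := by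
    have h2 : (fun t : ℝ => t + x) ⁻¹' Ioi x = Ioi 0 := by ext t; simp
    rw [← h2]
    exact (measurePreserving_add_right volume x).setIntegral_preimage_emb
      (measurableEmbedding_addRight x) _ _
  rw [← h1]
  refine setIntegral_congr_fun measurableSet_Ioi fun t ht => ?_
  have h3 : {z : ℝ | t < max (z - x) 0} = Ioi (t + x) := by
    ext z
    have : ¬ t < 0 := not_lt.2 (le_of_lt ht)
    simp [this, lt_sub_iff_add_lt]
  simp only [h3]
  rfl

end H0

lemma integrableOn_exp_mul_posPart (ξ : ℂ) (z : ℝ) :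
    IntegrableOn (fun x : ℝ => Complex.exp (-ξ * x) * ((max (z - x) 0 : ℝ) : ℂ)) (Ioi 0) := by
  have h1 : IntegrableOn (fun x : ℝ => Complex.exp (-ξ * x) * ((max (z - x) 0 : ℝ) : ℂ))
      (Ioc 0 z) :=
    (Continuous.integrableOn_Icc (by fun_prop)).mono_set Ioc_subset_Icc_self
  refine h1.of_forall_sdiff_eq_zero measurableSet_Ioi fun x hx => ?_
  have : z < x := by
    by_contra h
    exact hx.2 ⟨hx.1, not_lt.1 h⟩
  simp [max_eq_right (sub_nonpos.2 this.le)]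

lemma integral_exp_mul_posPart {ξ : ℂ} (hξ : ξ ≠ 0) {z : ℝ} (hz : 0 < z) :
    ∫ x in Ioi (0 : ℝ), Complex.exp (-ξ * x) * ((max (z - x) 0 : ℝ) : ℂ) =
      levyKernel 0 ξ z / ξ ^ 2 := by
  rw [setIntegral_eq_of_subset_of_forall_sdiff_eq_zero measurableSet_Ioi
    (s := Ioc 0 z) Ioc_subset_Ioi_self]
  · have h1 : ∀ x ∈ uIcc 0 z, HasDerivAt
        (fun x : ℝ => Complex.exp (-ξ * x) * (-((z : ℂ) - x) / ξ + 1 / ξ ^ 2))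
        (Complex.exp (-ξ * x) * ((z : ℂ) - x)) x := by
      intro x _
      have h2 : HasDerivAt (fun x : ℝ => (x : ℂ)) 1 x := Complex.ofRealCLM.hasDerivAt
      have h3 := ((h2.const_mul (-ξ)).cexp).mul
        ((((h2.const_sub (z : ℂ)).neg).div_const ξ).add_const (1 / ξ ^ 2))
      refine h3.congr_deriv ?_
      simp only [Pi.neg_apply]
      field_simp
      ring
    have h4 : ∫ x in Ioc 0 z, Complex.exp (-ξ * x) * ((max (z - x) 0 : ℝ) : ℂ) =
        ∫ x in Ioc 0 z, Complex.exp (-ξ * x) * ((z : ℂ) - x) := by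
      refine setIntegral_congr_fun measurableSet_Ioc fun x hx => ?_
      simp [max_eq_left (sub_nonneg.2 hx.2)]
    rw [h4, ← intervalIntegral.integral_of_le hz.le,
      intervalIntegral.integral_eq_sub_of_hasDerivAt h1
        (Continuous.intervalIntegrable (by fun_prop) _ _)]
    simp [levyKernel]
    field_simp
    ring
  · intro x hx
    have : z < x := by
      by_contra h
      exact hx.2 ⟨hx.1, not_lt.1 h⟩
    simp [max_eq_right (sub_nonpos.2 this.le)]

lemma norm_exp_mul_posPart (ξ : ℂ) (x z : ℝ) :
    ‖Complex.exp (-ξ * x) * ((max (z - x) 0 : ℝ) : ℂ)‖ =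
      (Complex.exp (-(ξ.re : ℂ) * x) * ((max (z - x) 0 : ℝ) : ℂ)).re := by
  have : Complex.exp (-(ξ.re : ℂ) * x) * ((max (z - x) 0 : ℝ) : ℂ) =
      ((Real.exp (-ξ.re * x) * max (z - x) 0 : ℝ) : ℂ) := by
    push_cast
    rfl
  rw [this, Complex.ofReal_re, norm_mul, Complex.norm_exp, Complex.norm_real,
    Real.norm_of_nonneg (le_max_right _ _)]
  simp

namespace H0

variable {φ : Measure ℝ}

lemma psiFn_eq (hφ : H0 φ) {ξ : ℂ} (hξ : 0 < ξ.re) :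
    psiFn φ ξ = ∫ z, levyKernel 0 ξ z ∂φ := by
  have := hφ.sFinite
  have hξ0 : ξ ≠ 0 := by
    rintro rfl
    simp at hξ
  have hre0 : (ξ.re : ℂ) ≠ 0 := by exact_mod_cast hξ.ne'
  have hint : Integrable (Function.uncurry fun x z : ℝ =>
      Complex.exp (-ξ * x) * ((max (z - x) 0 : ℝ) : ℂ)) ((volume.restrict (Ioi 0)).prod φ) := by
    rw [integrable_prod_iff']
    · refine ⟨Eventually.of_forall fun z => integrableOn_exp_mul_posPart ξ z, ?_⟩
      have h1 : Integrable (fun z => (levyKernel 0 (ξ.re : ℂ) z / (ξ.re : ℂ) ^ 2).re) φ :=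
        ((hφ.integrable_levyKernel 0 (by simpa using hξ)).div_const _).re
      refine h1.congr ?_
      filter_upwards [hφ.ae_pos_s19] with z hz
      rw [← integral_exp_mul_posPart hre0 hz]
      simp only [Function.uncurry_apply_pair, norm_exp_mul_posPart ξ]
      exact (integral_re (integrableOn_exp_mul_posPart (ξ.re : ℂ) z)).symm
    · exact Continuous.aestronglyMeasurable (by unfold Function.uncurry; fun_prop)
  have h1 : ∫ x in Ioi (0 : ℝ), Complex.exp (-ξ * (x : ℂ)) * (PhiFn φ x : ℂ) =
      ∫ x in Ioi (0 : ℝ), ∫ z, Complex.exp (-ξ * x) * ((max (z - x) 0 : ℝ) : ℂ) ∂φ := by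
    refine setIntegral_congr_fun measurableSet_Ioi fun x hx => ?_
    simp only [hφ.phiFn_eq hx]
    rw [integral_const_mul, integral_complex_ofReal]
  rw [psiFn, h1, integral_integral_swap hint, ← integral_const_mul]
  refine integral_congr_ae ?_
  filter_upwards [hφ.ae_pos_s19] with z hz
  rw [integral_exp_mul_posPart hξ0 hz]
  field_simp

lemma iteratedDeriv_psiFn (hφ : H0 φ) (n : ℕ) {ξ : ℂ} (hξ : 0 < ξ.re) :
    iteratedDeriv n (psiFn φ) ξ = ∫ z, levyKernel n ξ z ∂φ := by
  induction n generalizing ξ with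
  | zero => rw [iteratedDeriv_zero, hφ.psiFn_eq hξ]
  | succ n ih =>
    have h1 : iteratedDeriv n (psiFn φ) =ᶠ[𝓝 ξ] fun ζ => ∫ z, levyKernel n ζ z ∂φ := by
      filter_upwards [(isOpen_lt continuous_const Complex.continuous_re).mem_nhds hξ] with ζ hζ
      exact ih hζ
    rw [iteratedDeriv_succ, h1.deriv_eq, (hφ.hasDerivAt_integral_levyKernel n hξ).deriv]

end H0

/-- The integrand of the Grünwald coefficients, as a function of `w = z / h`. -/
def grunKernel (j : ℕ) (w : ℝ) : ℝ :=
  w ^ j / (Nat.factorial j : ℝ) * Real.exp (-w) +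
    (if j = 0 then -1 + w else if j = 1 then -w else 0)

lemma ofReal_grunKernel (j : ℕ) {h : ℝ} (hh : 0 < h) (z : ℝ) :
    ((grunKernel j (z / h) : ℝ) : ℂ) =
      ((-1 : ℂ) ^ j / ((Nat.factorial j : ℂ) * (h : ℂ) ^ j)) * levyKernel j (1 / (h : ℂ)) z := by
  have hh' : (h : ℂ) ≠ 0 := by exact_mod_cast hh.ne'
  have hf : (Nat.factorial j : ℂ) ≠ 0 := by exact_mod_cast j.factorial_ne_zero
  have h1 : (-(z : ℂ)) ^ j = (-1) ^ j * (z : ℂ) ^ j := by rw [← mul_pow, neg_one_mul]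
  have h2 : ((-1 : ℂ) ^ j) * (-1) ^ j = 1 := by rw [← mul_pow]; simp
  have h3 : -(1 / (h : ℂ)) * z = -(z / h) := by ring
  have h4 : ((z / h : ℂ)) ^ j / (Nat.factorial j : ℂ) =
      (-1 : ℂ) ^ j / ((Nat.factorial j : ℂ) * (h : ℂ) ^ j) * (-(z : ℂ)) ^ j := by
    rw [h1, div_pow, div_mul_eq_mul_div, ← mul_assoc, h2, one_mul, div_div, mul_comm (_ ^ j)]
  rw [levyKernel, mul_add, ← mul_assoc, ← h4, h3, grunKernel]
  push_cast
  congr 1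
  rcases j with _ | _ | j
  · simp
    ring
  · simp
    ring
  · simp

lemma grunKernel_nonneg {j : ℕ} (hj : j ≠ 1) {w : ℝ} (hw : 0 ≤ w) : 0 ≤ grunKernel j w := by
  rcases j with _ | _ | j
  · simp only [grunKernel, pow_zero, Nat.factorial_zero, Nat.cast_one, div_one, one_mul, if_true]
    linarith [Real.add_one_le_exp (-w)]
  · exact absurd rfl hj
  · simp only [grunKernel, Nat.add_eq_zero_iff, Nat.add_eq_right, one_ne_zero, and_false, if_false,
      add_zero]
    positivity

lemma grunKernel_one_nonpos {w : ℝ} (hw : 0 ≤ w) : grunKernel 1 w ≤ 0 := by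
  have := Real.exp_le_one_iff.2 (neg_nonpos.2 hw)
  simp only [grunKernel, pow_one, Nat.factorial_one, Nat.cast_one, div_one, one_ne_zero, if_false,
    if_true]
  nlinarith

lemma hasSum_grunKernel (w : ℝ) : HasSum (fun j => grunKernel j w) 0 := by
  have h1 : HasSum (fun j : ℕ => w ^ j / (Nat.factorial j : ℝ) * Real.exp (-w))
      (Real.exp w * Real.exp (-w)) := by
    rw [Real.exp_eq_exp_ℝ]
    exact (NormedSpace.expSeries_div_hasSum_exp w).mul_right _
  have h2 : HasSum (fun j : ℕ => if j = 0 then -1 + w else if j = 1 then -w else 0)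
      (∑ j ∈ Finset.range 2, if j = 0 then -1 + w else if j = 1 then -w else 0) := by
    refine hasSum_sum_of_ne_finset_zero fun j hj => ?_
    rw [Finset.mem_range, not_lt] at hj
    rw [if_neg (by lia), if_neg (by lia)]
  have h3 : Real.exp w * Real.exp (-w) +
      (∑ j ∈ Finset.range 2, if j = 0 then -1 + w else if j = 1 then -w else 0) = 0 := by
    rw [← Real.exp_add]
    simp [Finset.sum_range_succ]
  exact h3 ▸ h1.add h2

lemma hasSum_norm_grunKernel {w : ℝ} (hw : 0 ≤ w) :
    HasSum (fun j => ‖grunKernel j w‖) (-2 * grunKernel 1 w) := by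
  have h1 : (fun j => ‖grunKernel j w‖) =
      Function.update (fun j => grunKernel j w) 1 (-grunKernel 1 w) := by
    ext j
    rcases eq_or_ne j 1 with rfl | hj
    · simp [abs_of_nonpos (grunKernel_one_nonpos hw)]
    · simp [hj, abs_of_nonneg (grunKernel_nonneg hj hw)]
  rw [h1]
  have h2 := (hasSum_grunKernel w).update 1 (-grunKernel 1 w)
  rwa [show -grunKernel 1 w - grunKernel 1 w + 0 = -2 * grunKernel 1 w by ring] at h2

namespace H0

variable {φ : Measure ℝ}

lemma integrable_grunKernel (hφ : H0 φ) (j : ℕ) {h : ℝ} (hh : 0 < h) :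
    Integrable (fun z => grunKernel j (z / h)) φ := by
  have h1 := ((hφ.integrable_levyKernel j (ξ := 1 / (h : ℂ))
    (by rw [← Complex.ofReal_one, ← Complex.ofReal_div]; simpa using hh)).const_mul
      ((-1 : ℂ) ^ j / ((Nat.factorial j : ℂ) * (h : ℂ) ^ j))).re
  refine h1.congr (Eventually.of_forall fun z => ?_)
  simp only [← ofReal_grunKernel j hh]
  rfl

lemma grunPsi_eq (hφ : H0 φ) (j : ℕ) {h : ℝ} (hh : 0 < h) :
    grunPsi φ j h = ∫ z, grunKernel j (z / h) ∂φ := by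
  rw [grunPsi, hφ.iteratedDeriv_psiFn j
    (by rw [← Complex.ofReal_one, ← Complex.ofReal_div]; simpa using hh), ← integral_const_mul]
  simp only [← ofReal_grunKernel j hh]
  rw [integral_complex_ofReal, Complex.ofReal_re]

lemma grunPsi_nonneg (hφ : H0 φ) {j : ℕ} (hj : j ≠ 1) {h : ℝ} (hh : 0 < h) :
    0 ≤ grunPsi φ j h := by
  rw [hφ.grunPsi_eq j hh]
  refine integral_nonneg_of_ae ?_
  filter_upwards [hφ.ae_pos_s19] with z hz
  exact grunKernel_nonneg hj (by positivity)

lemma hasSum_grunPsi (hφ : H0 φ) {h : ℝ} (hh : 0 < h) :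
    HasSum (fun j => grunPsi φ j h) 0 := by
  simp only [hφ.grunPsi_eq _ hh]
  have h1 := hasSum_integral_of_dominated_convergence (μ := φ)
    (F := fun j z => grunKernel j (z / h)) (f := fun _ => (0 : ℝ))
    (fun j z => ‖grunKernel j (z / h)‖)
    (fun j => (hφ.integrable_grunKernel j hh).aestronglyMeasurable)
    (fun j => Eventually.of_forall fun z => le_rfl)
    (hφ.ae_pos_s19.mono fun z hz => (hasSum_norm_grunKernel (by positivity)).summable)
    (((hφ.integrable_grunKernel 1 hh).const_mul (-2)).congr
      (hφ.ae_pos_s19.mono fun z hz => (hasSum_norm_grunKernel (by positivity)).tsum_eq.symm))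
    (Eventually.of_forall fun z => hasSum_grunKernel (z / h))
  simpa using h1

end H0

/-- for fixed `h > 0`, the Grünwald-type scheme
`A_h f (x) = Σ_j G^ψ_{j,h} f(x + (j-1)h)` defines a bounded operator on `C₀(ℝ)` with
`‖A_h‖ ≤ 2|G^ψ_{1,h}|`, whose exponentials `e^{t A_h}`, `t ≥ 0`, are positive
contractions on `C₀(ℝ)`. -/
theorem grunwald_scheme_feller (φ : Measure ℝ) (hH0 : H0 φ) (h : ℝ) (hh : 0 < h) :
    ∃ A : C₀(ℝ, ℝ) →L[ℝ] C₀(ℝ, ℝ),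
      (∀ f : C₀(ℝ, ℝ), ∀ x : ℝ,
        A f x = ∑' j : ℕ, grunPsi φ j h * f (x + ((j : ℝ) - 1) * h)) ∧
      ‖A‖ ≤ 2 * |grunPsi φ 1 h| ∧
      ∀ t : ℝ, 0 ≤ t →
        (∀ f : C₀(ℝ, ℝ), ‖expOp A t f‖ ≤ ‖f‖) ∧
        (∀ f : C₀(ℝ, ℝ), (∀ x : ℝ, 0 ≤ f x) → ∀ x : ℝ, 0 ≤ expOp A t f x) := by
  exact exists_translation_series_generator (fun j hj => hH0.grunPsi_nonneg hj hh)
    (hH0.hasSum_grunPsi hh) h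
end
end
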